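/- arXiv:0711.0013 — 2 statements merged into one kernel-verified Lean document; each statement's English description precedes it below -/
import Mathlib

section
/- A one-parameter family of Sobolev inequalities on the hyperbolic plane (inequality (3.13)): Let n ≥ 5 be an integer, set k̃ = (n−2)/2 and p = 2 + 2/k̃ = 2n/(n−2). Let g : H → [0,∞) be a smooth compactly supported function on the upper half-plane. Then ∫_H g^p dμ ≤ ((k̃−1)/(k̃+1))^{1+1/k̃} · ((2k̃+1)/(2π))^{1/k̃} · [ ∫_H g² dμ + (1/(k̃(k̃−1))) ∫_H (|∂_t g|² + |∂_y g|²) dt dy ]^{1+1/k̃}. -/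
/-!
Put `N = 2k + 2`. Substituting `f = y⁻ᵏ g` turns the claim into the sharp Sobolev inequality for the
measure `y²ᵏ dt dy` on the half-plane, which behaves like Lebesgue measure in dimension `N`: the
mass `∫ gᵖ dμ` becomes `∫ |f|ᵖ y²ᵏ`, and the weighted energy of `f` is
`k(k - 1) ∫ g² dμ + ∫ |∇g|²`, because their densities differ by the divergence `k ∂_y (g² / y)`.

The weighted inequality is proved by mass transport. Given a positive density `G` with the mass of
`|f|ᵖ`, the Knothe map transports first the `t`-marginals and then the vertical slices onto each
other. Its Monge–Ampère equation and the AM–GM inequality bound the entropy `∫ G^(1 - 1/N) y²ᵏ` by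
the integral of `|f|^(2 + 1/k)` against the weighted divergence of the map. Integration by parts and
Cauchy–Schwarz then bound the squared entropy by the weighted energy of `f` times the second moment
of `G`. For `G` a multiple of the bubble `(1 + t² + y²)^(-N)` all integrals of `G` are Gamma
functions, and the bound becomes the inequality with the sharp constant.
-/

open MeasureTheory

/-- The hyperbolic area measure `μ = y^{−2} dt dy` on the upper half-plane
`H = {(t,y) : y > 0}`. -/
noncomputable def muUpper : Measure (ℝ × ℝ) :=
  (volume.restrict {p : ℝ × ℝ | 0 < p.2}).withDensity
    (fun p => ENNReal.ofReal ((p.2 ^ 2)⁻¹))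

open Set Filter Topology

section Transport

variable {F G T : ℝ → ℝ} {a b c d : ℝ}

theorem exists_orderIso_eq_primitive {m : ℝ} (hG : Continuous G) (hm : 0 < m)
    (hGm : ∀ x, m ≤ G x) (c : ℝ) : ∃ e : ℝ ≃o ℝ, ∀ s, e s = ∫ x in c..s, G x := by
  set B : ℝ → ℝ := fun s ↦ ∫ x in c..s, G x
  have hB (s : ℝ) : HasDerivAt B (G s) s := hG.integral_hasStrictDerivAt c s |>.hasDerivAt
  have hB_mono : StrictMono B := strictMono_of_hasDerivAt_pos hB fun s ↦ hm.trans_le (hGm s)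
  have hB_slope : Monotone fun s ↦ B s - m * s :=
    monotone_of_hasDerivAt_nonneg (fun s ↦ (hB s).sub ((hasDerivAt_id s).const_mul m))
      fun s ↦ by simpa using hGm s
  have hBc : B c = 0 := intervalIntegral.integral_same
  have hB_surj : Function.Surjective B := by
    refine (continuous_iff_continuousAt.2 fun s ↦ (hB s).continuousAt).surjective
      (tendsto_atTop_mono' _ (f₁ := fun s ↦ m * s + -(m * c)) ?_ ?_)
      (tendsto_atBot_mono' _ (f₁ := fun s ↦ m * s + -(m * c)) ?_ ?_)
    · filter_upwards [eventually_ge_atTop c] with s hs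
      linarith [show B c - m * c ≤ B s - m * s from hB_slope hs]
    · exact tendsto_atTop_add_const_right _ _ (tendsto_id.const_mul_atTop hm)
    · filter_upwards [eventually_le_atBot c] with s hs
      linarith [show B s - m * s ≤ B c - m * c from hB_slope hs]
    · exact tendsto_atBot_add_const_right _ _ (tendsto_id.const_mul_atBot hm)
  exact ⟨hB_mono.orderIsoOfSurjective B hB_surj, fun _ ↦ rfl⟩

/-- `T` is a monotone transport map from the density `F` on `[a, b]` to the density `G` on
`[c, d]`: the last field is the one-dimensional Monge–Ampère equation. -/
structure IsTransport (F G T : ℝ → ℝ) (a b c d : ℝ) : Prop where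
  contDiff : ContDiff ℝ 1 T
  monotone : Monotone T
  map_left : T a = c
  map_right : T b = d
  deriv_mul : ∀ x ∈ Icc a b, deriv T x * G (T x) = F x

theorem exists_isTransport_of_continuous {m : ℝ} (hF : Continuous F) (hF₀ : ∀ x, 0 ≤ F x)
    (hG : Continuous G) (hm : 0 < m) (hGm : ∀ x, m ≤ G x)
    (hmass : ∫ x in a..b, F x = ∫ x in c..d, G x) : ∃ T, IsTransport F G T a b c d := by
  obtain ⟨e, he⟩ := exists_orderIso_eq_primitive hG hm hGm c
  have hG₀ (x : ℝ) : G x ≠ 0 := (hm.trans_le (hGm x)).ne'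
  set A : ℝ → ℝ := fun s ↦ ∫ x in a..s, F x
  have hA (s : ℝ) : HasDerivAt A (F s) s := (hF.integral_hasStrictDerivAt a s).hasDerivAt
  have he' (s : ℝ) : HasDerivAt e (G s) s := by
    rw [funext he]; exact (hG.integral_hasStrictDerivAt c s).hasDerivAt
  have hT (x : ℝ) : HasDerivAt (e.symm ∘ A) ((G (e.symm (A x)))⁻¹ * F x) x :=
    ((he' _).of_local_left_inverse e.symm.continuous.continuousAt (hG₀ _)
      (.of_forall e.apply_symm_apply)).comp x (hA x)
  have hT_cont : Continuous (e.symm ∘ A) :=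
    continuous_iff_continuousAt.2 fun x ↦ (hT x).continuousAt
  refine ⟨e.symm ∘ A, contDiff_one_iff_deriv.2 ⟨fun x ↦ (hT x).differentiableAt, ?_⟩,
    e.symm.monotone.comp (monotone_of_hasDerivAt_nonneg hA hF₀), ?_, ?_, fun x _ ↦ ?_⟩
  · rw [funext fun x ↦ (hT x).deriv]
    exact ((hG.comp hT_cont).inv₀ fun x ↦ hG₀ _).mul hF
  · simp [OrderIso.symm_apply_eq, he, A]
  · rw [Function.comp_apply, OrderIso.symm_apply_eq, he, ← hmass]
  · rw [(hT x).deriv, Function.comp_apply, mul_right_comm, inv_mul_cancel₀ (hG₀ _), one_mul]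

namespace IsTransport

theorem mem_Icc (hT : IsTransport F G T a b c d) {x : ℝ} (hx : x ∈ Icc a b) : T x ∈ Icc c d :=
  ⟨hT.map_left ▸ hT.monotone hx.1, hT.map_right ▸ hT.monotone hx.2⟩

theorem congr {F' G' : ℝ → ℝ} (hT : IsTransport F G T a b c d) (hF : EqOn F F' (Icc a b))
    (hG : EqOn G G' (Icc c d)) : IsTransport F' G' T a b c d where
  __ := hT
  deriv_mul x hx := by rw [← hG (hT.mem_Icc hx), ← hF hx, hT.deriv_mul x hx]

theorem deriv_nonneg (hT : IsTransport F G T a b c d) (x : ℝ) : 0 ≤ deriv T x :=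
  hT.monotone.deriv_nonneg

theorem hasDerivAt (hT : IsTransport F G T a b c d) (x : ℝ) : HasDerivAt T (deriv T x) x :=
  (hT.contDiff.differentiable one_ne_zero x).hasDerivAt

theorem continuous (hT : IsTransport F G T a b c d) : Continuous T :=
  hT.contDiff.continuous

theorem continuous_deriv (hT : IsTransport F G T a b c d) : Continuous (deriv T) :=
  (contDiff_one_iff_deriv.1 hT.contDiff).2

theorem integral_comp_mul_deriv (hT : IsTransport F G T a b c d) (hab : a ≤ b) {H : ℝ → ℝ}
    (hH : ContinuousOn H (Icc c d)) :
    ∫ x in a..b, H (T x) * deriv T x = ∫ y in c..d, H y := by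
  have h := intervalIntegral.integral_comp_mul_deriv' (a := a) (b := b) (g := H)
    (fun x _ ↦ hT.hasDerivAt x) hT.continuous_deriv.continuousOn (hH.mono ?_)
  · rwa [hT.map_left, hT.map_right] at h
  · rw [uIcc_of_le hab]
    exact image_subset_iff.2 fun x hx ↦ hT.mem_Icc hx

theorem integral_comp_mul (hT : IsTransport F G T a b c d) (hab : a ≤ b) {H : ℝ → ℝ}
    (hH : ContinuousOn H (Icc c d)) (hG : ContinuousOn G (Icc c d)) :
    ∫ x in a..b, H (T x) * F x = ∫ y in c..d, H y * G y := by
  refine Eq.trans (intervalIntegral.integral_congr fun x hx ↦ ?_)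
    (hT.integral_comp_mul_deriv hab (hH.mul hG))
  rw [uIcc_of_le hab] at hx
  simp only [← hT.deriv_mul x hx]
  ring

end IsTransport

theorem exists_isTransport (hab : a ≤ b) (hcd : c ≤ d) (hF : ContinuousOn F (Icc a b))
    (hF₀ : ∀ x ∈ Icc a b, 0 ≤ F x) (hG : ContinuousOn G (Icc c d)) (hG₀ : ∀ x ∈ Icc c d, 0 < G x)
    (hmass : ∫ x in a..b, F x = ∫ x in c..d, G x) : ∃ T, IsTransport F G T a b c d := by
  set F' : ℝ → ℝ := IccExtend hab (domRestrict _ F)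
  set G' : ℝ → ℝ := IccExtend hcd (domRestrict _ G)
  have hF' : EqOn F' F (Icc a b) := fun _ hx ↦ IccExtend_of_mem hab _ hx
  have hG' : EqOn G' G (Icc c d) := fun _ hx ↦ IccExtend_of_mem hcd _ hx
  obtain ⟨x₀, hx₀, hmin⟩ := isCompact_Icc.exists_isMinOn (nonempty_Icc.2 hcd) hG
  have hmass' : ∫ x in a..b, F' x = ∫ x in c..d, G' x := by
    rw [intervalIntegral.integral_congr (uIcc_of_le hab ▸ hF'), hmass]
    exact (intervalIntegral.integral_congr (uIcc_of_le hcd ▸ hG')).symm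
  obtain ⟨T, hT⟩ := exists_isTransport_of_continuous hF.domRestrict.Icc_extend'
    (fun x ↦ hF₀ _ (projIcc a b hab x).2) hG.domRestrict.Icc_extend' (hG₀ x₀ hx₀)
    (fun x ↦ hmin (projIcc c d hcd x).2) hmass'
  exact ⟨T, hT.congr hF' hG'⟩

end Transport

section OneDimensional

variable {a b c d k w α ε τ : ℝ} {f f' T W φ' h h' Γ : ℝ → ℝ}

theorem add_two_mul_geom_mean_le {u v x : ℝ} (hu : 0 ≤ u) (hv : 0 ≤ v) (hx : 0 ≤ x) (hw : 0 ≤ w) :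
    (w + 2) * (u * v * x ^ w) ^ (1 / (w + 2)) ≤ u + v + w * x := by
  have amgm := Real.geom_mean_le_arith_mean3_weighted (w₁ := 1 / (w + 2)) (w₂ := 1 / (w + 2))
    (w₃ := w / (w + 2)) (by positivity) (by positivity) (by positivity) hu hv hx
    (by field_simp; ring)
  have hpow : (u * v * x ^ w) ^ (1 / (w + 2))
      = u ^ (1 / (w + 2)) * v ^ (1 / (w + 2)) * x ^ (w / (w + 2)) := by
    rw [Real.mul_rpow (by positivity) (by positivity), Real.mul_rpow hu hv, ← Real.rpow_mul hx,
      mul_one_div]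
  calc (w + 2) * (u * v * x ^ w) ^ (1 / (w + 2))
      ≤ (w + 2) * (1 / (w + 2) * u + 1 / (w + 2) * v + w / (w + 2) * x) := by
        rw [hpow]; gcongr
    _ = u + v + w * x := by field_simp

theorem abs_mul_abs_rpow_sub_two_mul_self (hα : 1 < α) (x : ℝ) :
    |α * |x| ^ (α - 2) * x| = α * |x| ^ (α - 1) := by
  rcases eq_or_ne x 0 with rfl | hx
  · simp [Real.zero_rpow (sub_pos.2 hα).ne']
  · rw [abs_mul, abs_mul, abs_of_pos (zero_lt_one.trans hα), abs_of_nonneg (by positivity),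
      mul_assoc, ← Real.rpow_add_one (abs_pos.2 hx).ne']
    ring_nf

theorem continuous_mul_abs_rpow_sub_two_mul_self (hα : 1 < α) :
    Continuous fun x : ℝ ↦ α * |x| ^ (α - 2) * x := by
  have hderiv := contDiff_one_iff_deriv.1 (contDiff_norm_rpow (E := ℝ) hα) |>.2
  rwa [show deriv (fun x : ℝ ↦ ‖x‖ ^ α) = fun x ↦ α * |x| ^ (α - 2) * x from
    funext fun x ↦ (hasDerivAt_abs_rpow x hα).deriv] at hderiv

theorem abs_mul_abs_rpow_sub_two_mul_self_mul_le (hα : 1 < α) (hε : 0 < ε) (x v z : ℝ) :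
    |α * |x| ^ (α - 2) * x * v * z| ≤
      α / 2 * (ε * v ^ 2 + ε⁻¹ * (z ^ 2 * |x| ^ (2 * (α - 1)))) := by
  have hsq : |x| ^ (2 * (α - 1)) = (|x| ^ (α - 1)) ^ 2 := by
    rw [mul_comm, Real.rpow_mul (abs_nonneg _), Real.rpow_two]
  calc |α * |x| ^ (α - 2) * x * v * z|
      = α / 2 * ε⁻¹ * (2 * (ε * |v|) * (|z| * |x| ^ (α - 1))) := by
        rw [abs_mul, abs_mul, abs_mul_abs_rpow_sub_two_mul_self hα]
        field_simp
    _ ≤ α / 2 * ε⁻¹ * ((ε * |v|) ^ 2 + (|z| * |x| ^ (α - 1)) ^ 2) := by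
        gcongr
        exact two_mul_le_add_sq _ _
    _ = _ := by
        rw [hsq, mul_pow, mul_pow, sq_abs, sq_abs]
        field_simp

theorem integral_abs_rpow_mul_deriv_mul_le (hα : 1 < α) (hε : 0 < ε) (hab : a ≤ b)
    (hf : ∀ x ∈ Icc a b, HasDerivAt f (f' x) x) (hf' : ContinuousOn f' (Icc a b))
    (hfa : f a = 0) (hfb : f b = 0)
    (hφ : ∀ x ∈ Icc a b, HasDerivAt (fun x ↦ T x * W x) (φ' x) x)
    (hφ' : ContinuousOn φ' (Icc a b)) (hT : ContinuousOn T (Icc a b))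
    (hW : ContinuousOn W (Icc a b)) (hW₀ : ∀ x ∈ Icc a b, 0 ≤ W x) :
    ∫ x in a..b, |f x| ^ α * φ' x ≤
      α / 2 * (ε * (∫ x in a..b, f' x ^ 2 * W x)
        + ε⁻¹ * ∫ x in a..b, T x ^ 2 * |f x| ^ (2 * (α - 1)) * W x) := by
  have hfc : ContinuousOn f (Icc a b) := fun x hx ↦ (hf x hx).continuousAt.continuousWithinAt
  set D : ℝ → ℝ := fun x ↦ α * |f x| ^ (α - 2) * f x
  have hD : ContinuousOn D (Icc a b) :=
    (continuous_mul_abs_rpow_sub_two_mul_self hα).comp_continuousOn hfc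
  have hpow (x) (hx : x ∈ Icc a b) : HasDerivAt (fun x ↦ |f x| ^ α) (D x * f' x) x :=
    (hasDerivAt_abs_rpow (f x) hα).comp x (hf x hx)
  have by_parts : ∫ x in a..b, |f x| ^ α * φ' x = -∫ x in a..b, D x * f' x * (T x * W x) := by
    rw [intervalIntegral.integral_mul_deriv_eq_deriv_mul
      (fun x hx ↦ hpow x (by rwa [uIcc_of_le hab] at hx))
      (fun x hx ↦ hφ x (by rwa [uIcc_of_le hab] at hx))
      ((hD.mul hf').intervalIntegrable_of_Icc hab) (hφ'.intervalIntegrable_of_Icc hab)]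
    simp [hfa, hfb, (zero_lt_one.trans hα).ne']
  have young (x) (hx : x ∈ Icc a b) : -(D x * f' x * (T x * W x)) ≤
      α / 2 * (ε * (f' x ^ 2 * W x) + ε⁻¹ * (T x ^ 2 * |f x| ^ (2 * (α - 1)) * W x)) := by
    have := mul_le_mul_of_nonneg_right ((neg_le_abs _).trans
      (abs_mul_abs_rpow_sub_two_mul_self_mul_le hα hε (f x) (f' x) (T x))) (hW₀ x hx)
    linear_combination this
  have hE : IntervalIntegrable (fun x ↦ f' x ^ 2 * W x) volume a b :=
    ((hf'.pow 2).mul hW).intervalIntegrable_of_Icc hab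
  have hZ : IntervalIntegrable (fun x ↦ T x ^ 2 * |f x| ^ (2 * (α - 1)) * W x) volume a b :=
    (((hT.pow 2).mul (hfc.abs.rpow_const fun _ _ ↦ .inr (by linarith))).mul
      hW).intervalIntegrable_of_Icc hab
  rw [by_parts, ← intervalIntegral.integral_neg, ← intervalIntegral.integral_const_mul,
    ← intervalIntegral.integral_const_mul,
    ← intervalIntegral.integral_add (hE.const_mul _) (hZ.const_mul _),
    ← intervalIntegral.integral_const_mul]
  exact intervalIntegral.integral_mono_on hab
    (((hD.mul hf').mul (hT.mul hW)).neg.intervalIntegrable_of_Icc hab)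
    (((hE.const_mul _).add (hZ.const_mul _)).const_mul _) young

theorem add_two_mul_rpow_mul_le_of_mongeAmpere {x y z v H : ℝ} (hk : 0 < k) (hx : 0 < x)
    (hy : 0 ≤ y) (hτ : 0 ≤ τ) (hv : 0 ≤ v) (hH : 0 < H)
    (hMA : v * (τ * H * y ^ (2 * k)) = |z| ^ (2 + 2 / k) * x ^ (2 * k)) :
    (2 * k + 2) * (H ^ (-(1 / (2 * k + 2))) * (|z| ^ (2 + 2 / k) * x ^ (2 * k))) ≤
      |z| ^ (2 + 1 / k)
        * (τ * x ^ (2 * k) + (v * x ^ (2 * k) + y * (2 * k * x ^ (2 * k - 1)))) := by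
  have hxk : 0 < x ^ (2 * k) := Real.rpow_pos_of_pos hx _
  have hgeom : τ * v * (y / x) ^ (2 * k) = |z| ^ (2 + 2 / k) * H⁻¹ := by
    rw [Real.div_rpow hy hx.le, eq_mul_inv_iff_mul_eq₀ hH.ne', mul_div_assoc', div_mul_eq_mul_div,
      div_eq_iff hxk.ne']
    linear_combination hMA
  have hroot : (τ * v * (y / x) ^ (2 * k)) ^ (1 / (2 * k + 2))
      = |z| ^ (1 / k) * H ^ (-(1 / (2 * k + 2))) := by
    rw [hgeom, Real.mul_rpow (by positivity) (by positivity), ← Real.rpow_mul (abs_nonneg _),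
      Real.inv_rpow hH.le, ← Real.rpow_neg hH.le]
    congr 2
    field_simp
  have hsplit : |z| ^ (2 + 2 / k) = |z| ^ (2 + 1 / k) * |z| ^ (1 / k) := by
    rw [← Real.rpow_add_of_nonneg (abs_nonneg _) (by positivity) (by positivity)]
    ring_nf
  -- In dimension `2 * k + 2` the Jacobian of the Knothe map has the eigenvalues `τ` and `v`, and
  -- `y / x` with multiplicity `2 * k`.
  have amgm := add_two_mul_geom_mean_le hτ hv (div_nonneg hy hx.le) (w := 2 * k) (by positivity)
  calc (2 * k + 2) * (H ^ (-(1 / (2 * k + 2))) * (|z| ^ (2 + 2 / k) * x ^ (2 * k)))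
      = |z| ^ (2 + 1 / k) * x ^ (2 * k)
          * ((2 * k + 2) * (τ * v * (y / x) ^ (2 * k)) ^ (1 / (2 * k + 2))) := by
        rw [hsplit, hroot]; ring
    _ ≤ |z| ^ (2 + 1 / k) * x ^ (2 * k) * (τ + v + 2 * k * (y / x)) := by gcongr
    _ = _ := by rw [Real.rpow_sub_one hx.ne']; ring

theorem continuousOn_rpow_Icc (hc : 0 < c) (q : ℝ) : ContinuousOn (fun y : ℝ ↦ y ^ q) (Icc c d) :=
  continuousOn_id.rpow_const fun _ hy ↦ .inl (hc.trans_le hy.1).ne'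

theorem entropy_le_of_isTransport (hk : 0 < k) (hc : 0 < c) (hcd : c ≤ d) (hτ : 0 ≤ τ)
    (hh : ContinuousOn h (Icc c d)) (hΓ : ContinuousOn Γ (Icc c d)) (hΓ₀ : ∀ y ∈ Icc c d, 0 < Γ y)
    (hT : IsTransport (fun y ↦ |h y| ^ (2 + 2 / k) * y ^ (2 * k)) (fun y ↦ τ * Γ y * y ^ (2 * k))
      T c d c d) :
    (2 * k + 2) * (τ * ∫ y in c..d, Γ y ^ ((2 * k + 1) / (2 * k + 2)) * y ^ (2 * k)) ≤
      τ * (∫ y in c..d, |h y| ^ (2 + 1 / k) * y ^ (2 * k))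
        + ∫ y in c..d, |h y| ^ (2 + 1 / k)
            * (deriv T y * y ^ (2 * k) + T y * (2 * k * y ^ (2 * k - 1))) := by
  have hW (q : ℝ) : ContinuousOn (fun y : ℝ ↦ y ^ q) (Icc c d) := continuousOn_rpow_Icc hc q
  have hhpow {q : ℝ} (hq : 0 ≤ q) : ContinuousOn (fun y ↦ |h y| ^ q) (Icc c d) :=
    hh.abs.rpow_const fun _ _ ↦ .inr hq
  have hΓpow (q : ℝ) : ContinuousOn (fun y ↦ Γ y ^ q) (Icc c d) :=
    hΓ.rpow_const fun y hy ↦ .inl (hΓ₀ y hy).ne'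
  have transport : τ * ∫ y in c..d, Γ y ^ ((2 * k + 1) / (2 * k + 2)) * y ^ (2 * k)
      = ∫ y in c..d, Γ (T y) ^ (-(1 / (2 * k + 2))) * (|h y| ^ (2 + 2 / k) * y ^ (2 * k)) := by
    rw [hT.integral_comp_mul hcd (H := fun y ↦ Γ y ^ (-(1 / (2 * k + 2)))) (hΓpow _)
      ((continuousOn_const.mul hΓ).mul (hW _)), ← intervalIntegral.integral_const_mul]
    refine intervalIntegral.integral_congr fun y hy ↦ ?_
    rw [uIcc_of_le hcd] at hy
    have hexp : (2 * k + 1) / (2 * k + 2) = -(1 / (2 * k + 2)) + 1 := by field_simp; ring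
    simp only [hexp, Real.rpow_add_one (hΓ₀ y hy).ne']
    ring
  have hI₁ : ContinuousOn (fun y ↦ |h y| ^ (2 + 1 / k) * y ^ (2 * k)) (Icc c d) :=
    (hhpow (by positivity)).mul (hW _)
  have hI₂ : ContinuousOn (fun y ↦ |h y| ^ (2 + 1 / k)
      * (deriv T y * y ^ (2 * k) + T y * (2 * k * y ^ (2 * k - 1)))) (Icc c d) :=
    (hhpow (by positivity)).mul ((hT.continuous_deriv.continuousOn.mul (hW _)).add
      (hT.continuous.continuousOn.mul (continuousOn_const.mul (hW _))))
  rw [transport, ← intervalIntegral.integral_const_mul, ← intervalIntegral.integral_const_mul,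
    ← intervalIntegral.integral_add ((hI₁.intervalIntegrable_of_Icc hcd).const_mul _)
      (hI₂.intervalIntegrable_of_Icc hcd)]
  refine intervalIntegral.integral_mono_on hcd
    (ContinuousOn.intervalIntegrable_of_Icc hcd (continuousOn_const.mul
      (((hΓpow _).comp hT.continuous.continuousOn fun y hy ↦ hT.mem_Icc hy).mul
        ((hhpow (by positivity)).mul (hW _)))))
    (((hI₁.intervalIntegrable_of_Icc hcd).const_mul _).add (hI₂.intervalIntegrable_of_Icc hcd))
    fun y hy ↦ ?_
  have := add_two_mul_rpow_mul_le_of_mongeAmpere hk (hc.trans_le hy.1)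
    (hc.le.trans (hT.mem_Icc hy).1) hτ (hT.deriv_nonneg y) (hΓ₀ _ (hT.mem_Icc hy))
    (hT.deriv_mul y hy)
  linear_combination this

theorem entropy_le_slice (hk : 0 < k) (hc : 0 < c) (hcd : c ≤ d)
    (hh : ∀ y ∈ Icc c d, HasDerivAt h (h' y) y) (hh' : ContinuousOn h' (Icc c d))
    (hhc : h c = 0) (hhd : h d = 0) (hΓ : ContinuousOn Γ (Icc c d))
    (hΓ₀ : ∀ y ∈ Icc c d, 0 < Γ y) (hτ : 0 ≤ τ)
    (hmass : ∫ y in c..d, |h y| ^ (2 + 2 / k) * y ^ (2 * k)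
      = τ * ∫ y in c..d, Γ y * y ^ (2 * k)) (hε : 0 < ε) :
    (2 * k + 2) * (τ * ∫ y in c..d, Γ y ^ ((2 * k + 1) / (2 * k + 2)) * y ^ (2 * k)) ≤
      τ * (∫ y in c..d, |h y| ^ (2 + 1 / k) * y ^ (2 * k))
        + (2 + 1 / k) / 2 * (ε * (∫ y in c..d, h' y ^ 2 * y ^ (2 * k))
          + ε⁻¹ * (τ * ∫ y in c..d, y ^ 2 * Γ y * y ^ (2 * k))) := by
  have hy₀ (y) (hy : y ∈ Icc c d) : 0 < y := hc.trans_le hy.1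
  have hW (q : ℝ) : ContinuousOn (fun y : ℝ ↦ y ^ q) (Icc c d) := continuousOn_rpow_Icc hc q
  rcases hτ.eq_or_lt with rfl | hτ
  · simp only [zero_mul, mul_zero, zero_add, add_zero]
    have : 0 ≤ ∫ y in c..d, h' y ^ 2 * y ^ (2 * k) :=
      intervalIntegral.integral_nonneg hcd fun y hy ↦ by have := hy₀ y hy; positivity
    positivity
  have hhcont : ContinuousOn h (Icc c d) := fun y hy ↦ (hh y hy).continuousAt.continuousWithinAt
  have hG : ContinuousOn (fun y ↦ τ * Γ y * y ^ (2 * k)) (Icc c d) :=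
    (continuousOn_const.mul hΓ).mul (hW _)
  obtain ⟨T, hT⟩ := exists_isTransport (F := fun y ↦ |h y| ^ (2 + 2 / k) * y ^ (2 * k))
    (G := fun y ↦ τ * Γ y * y ^ (2 * k)) hcd hcd
    ((hhcont.abs.rpow_const fun _ _ ↦ .inr (by positivity)).mul (hW _))
    (fun y hy ↦ by have := hy₀ y hy; positivity) hG
    (fun y hy ↦ by have := hy₀ y hy; have := hΓ₀ y hy; positivity)
    (by simp only [hmass, mul_assoc, intervalIntegral.integral_const_mul])
  have moment : ∫ y in c..d, T y ^ 2 * |h y| ^ (2 * (2 + 1 / k - 1)) * y ^ (2 * k)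
      = τ * ∫ y in c..d, y ^ 2 * Γ y * y ^ (2 * k) := by
    calc _ = ∫ y in c..d, T y ^ 2 * (|h y| ^ (2 + 2 / k) * y ^ (2 * k)) := by
          simp only [show 2 * (2 + 1 / k - 1) = 2 + 2 / k by ring, mul_assoc]
      _ = ∫ y in c..d, y ^ 2 * (τ * Γ y * y ^ (2 * k)) :=
          hT.integral_comp_mul hcd (continuous_pow 2).continuousOn hG
      _ = _ := by
          rw [← intervalIntegral.integral_const_mul]
          congr! 2
          ring
  refine (entropy_le_of_isTransport hk hc hcd hτ.le hhcont hΓ hΓ₀ hT).trans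
    ((add_le_add_iff_left _).2 (moment ▸ ?_))
  exact integral_abs_rpow_mul_deriv_mul_le (by linarith [one_div_pos.2 hk]) hε hcd hh hh' hhc hhd
    (fun y hy ↦ (hT.hasDerivAt y).mul (Real.hasDerivAt_rpow_const (.inl (hy₀ y hy).ne')))
    ((hT.continuous_deriv.continuousOn.mul (hW _)).add
      (hT.continuous.continuousOn.mul (continuousOn_const.mul (hW _))))
    hT.continuous.continuousOn (hW _) fun y hy ↦ by have := hy₀ y hy; positivity

end OneDimensional

section Box

variable {a b c d k α ε : ℝ} {f G : ℝ × ℝ → ℝ} {T W : ℝ → ℝ}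

theorem hasDerivAt_fst_of_contDiff (hf : ContDiff ℝ 1 f) (t y : ℝ) :
    HasDerivAt (fun s ↦ f (s, y)) (fderiv ℝ f (t, y) (1, 0)) t :=
  (hf.differentiable one_ne_zero (t, y)).hasFDerivAt.comp_hasDerivAt t
    ((hasDerivAt_id t).prodMk (hasDerivAt_const t y))

theorem hasDerivAt_snd_of_contDiff (hf : ContDiff ℝ 1 f) (t y : ℝ) :
    HasDerivAt (fun s ↦ f (t, s)) (fderiv ℝ f (t, y) (0, 1)) y :=
  (hf.differentiable one_ne_zero (t, y)).hasFDerivAt.comp_hasDerivAt y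
    ((hasDerivAt_const y t).prodMk (hasDerivAt_id y))

theorem continuous_fderiv_apply_of_contDiff (hf : ContDiff ℝ 1 f) (v : ℝ × ℝ) :
    Continuous fun z ↦ fderiv ℝ f z v :=
  (hf.continuous_fderiv one_ne_zero).clm_apply continuous_const

theorem integral_integral_swap_of_continuous {F : ℝ → ℝ → ℝ} (hF : Continuous F.uncurry) :
    ∫ t in a..b, ∫ y in c..d, F t y = ∫ y in c..d, ∫ t in a..b, F t y :=
  intervalIntegral_intervalIntegral_swap <|
    (hF.continuousOn.integrableOn_compact (isCompact_uIcc.prod isCompact_uIcc)).mono_set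
      (prod_mono uIoc_subset_uIcc uIoc_subset_uIcc)

theorem integral_deriv_mul_abs_rpow_le (hα : 1 < α) (hε : 0 < ε) (hab : a ≤ b) (hcd : c ≤ d)
    (hf : ContDiff ℝ 1 f) (hfa : ∀ y, f (a, y) = 0) (hfb : ∀ y, f (b, y) = 0)
    (hT : ContDiff ℝ 1 T) (hW : Continuous W) (hW₀ : ∀ y ∈ Icc c d, 0 ≤ W y) :
    ∫ t in a..b, deriv T t * ∫ y in c..d, |f (t, y)| ^ α * W y ≤
      α / 2 * (ε * (∫ t in a..b, ∫ y in c..d, fderiv ℝ f (t, y) (1, 0) ^ 2 * W y)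
        + ε⁻¹ * ∫ t in a..b, T t ^ 2 * ∫ y in c..d, |f (t, y)| ^ (2 * (α - 1)) * W y) := by
  have hf_cont := hf.continuous
  have hT_cont := hT.continuous
  have hα₀ : 0 ≤ α := by linarith
  have hp : 0 ≤ 2 * (α - 1) := by linarith
  have slice (y) (hy : y ∈ Icc c d) : ∫ t in a..b, |f (t, y)| ^ α * (deriv T t * W y) ≤
      α / 2 * (ε * (∫ t in a..b, fderiv ℝ f (t, y) (1, 0) ^ 2 * W y)
        + ε⁻¹ * ∫ t in a..b, T t ^ 2 * |f (t, y)| ^ (2 * (α - 1)) * W y) :=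
    integral_abs_rpow_mul_deriv_mul_le hα hε hab
      (fun t _ ↦ hasDerivAt_fst_of_contDiff hf t y) (by fun_prop) (hfa y) (hfb y)
      (fun t _ ↦ (hT.differentiable one_ne_zero t).hasDerivAt.mul_const (W y)) (by fun_prop)
      hT_cont.continuousOn continuousOn_const fun _ _ ↦ hW₀ y hy
  have hE : Continuous fun y ↦ ∫ t in a..b, fderiv ℝ f (t, y) (1, 0) ^ 2 * W y := by fun_prop
  have hZ : Continuous fun y ↦ ∫ t in a..b, T t ^ 2 * |f (t, y)| ^ (2 * (α - 1)) * W y := by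
    fun_prop (disch := assumption)
  calc ∫ t in a..b, deriv T t * ∫ y in c..d, |f (t, y)| ^ α * W y
      = ∫ y in c..d, ∫ t in a..b, |f (t, y)| ^ α * (deriv T t * W y) := by
        simp only [← intervalIntegral.integral_const_mul, mul_left_comm (deriv T _)]
        exact integral_integral_swap_of_continuous (by fun_prop (disch := assumption))
    _ ≤ ∫ y in c..d, α / 2 * (ε * (∫ t in a..b, fderiv ℝ f (t, y) (1, 0) ^ 2 * W y)
        + ε⁻¹ * ∫ t in a..b, T t ^ 2 * |f (t, y)| ^ (2 * (α - 1)) * W y) :=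
        intervalIntegral.integral_mono_on hcd
          (Continuous.intervalIntegrable (by fun_prop (disch := assumption)) _ _)
          (Continuous.intervalIntegrable (by fun_prop) _ _) slice
    _ = _ := by
        rw [intervalIntegral.integral_const_mul, intervalIntegral.integral_add
            ((hE.const_mul _).intervalIntegrable _ _) ((hZ.const_mul _).intervalIntegrable _ _),
          intervalIntegral.integral_const_mul, intervalIntegral.integral_const_mul,
          integral_integral_swap_of_continuous (a := c) (by fun_prop),
          integral_integral_swap_of_continuous (a := c) (by fun_prop (disch := assumption))]
        simp only [← intervalIntegral.integral_const_mul, mul_assoc]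

theorem intervalIntegral_mono_of_linear_le {S V E Z : ℝ → ℝ} {n A B : ℝ} (hab : a ≤ b)
    (hS : Continuous S) (hV : Continuous V) (hE : Continuous E) (hZ : Continuous Z)
    (hle : ∀ t ∈ Icc a b, n * S t ≤ V t + (A * E t + B * Z t)) :
    n * (∫ t in a..b, S t) ≤
      (∫ t in a..b, V t) + (A * (∫ t in a..b, E t) + B * ∫ t in a..b, Z t) := by
  have hAE := (hE.const_mul A).intervalIntegrable (μ := volume) a b
  have hBZ := (hZ.const_mul B).intervalIntegrable (μ := volume) a b
  rw [← intervalIntegral.integral_const_mul, ← intervalIntegral.integral_const_mul,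
    ← intervalIntegral.integral_const_mul, ← intervalIntegral.integral_add hAE hBZ,
    ← intervalIntegral.integral_add (hV.intervalIntegrable a b) (hAE.add hBZ)]
  exact intervalIntegral.integral_mono_on hab ((hS.const_mul n).intervalIntegrable a b)
    ((hV.intervalIntegrable a b).add (hAE.add hBZ)) hle

theorem integral_entropy_le (hk : 0 < k) (hε : 0 < ε) (hab : a ≤ b) (hc : 0 < c) (hcd : c ≤ d)
    (hf : ContDiff ℝ 1 f) (hfc : ∀ t, f (t, c) = 0) (hfd : ∀ t, f (t, d) = 0)
    (hG : Continuous G) (hG₀ : ∀ z, 0 < G z)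
    (hT : IsTransport (fun t ↦ ∫ y in c..d, |f (t, y)| ^ (2 + 2 / k) * y ^ (2 * k))
      (fun t ↦ ∫ y in c..d, G (t, y) * y ^ (2 * k)) T a b a b) :
    (2 * k + 2) * (∫ t in a..b, ∫ y in c..d, G (t, y) ^ ((2 * k + 1) / (2 * k + 2)) * y ^ (2 * k)) ≤
      (∫ t in a..b, deriv T t * ∫ y in c..d, |f (t, y)| ^ (2 + 1 / k) * y ^ (2 * k))
        + (2 + 1 / k) / 2
          * (ε * (∫ t in a..b, ∫ y in c..d, fderiv ℝ f (t, y) (0, 1) ^ 2 * y ^ (2 * k))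
            + ε⁻¹ * ∫ t in a..b, ∫ y in c..d, y ^ 2 * G (t, y) * y ^ (2 * k)) := by
  have hf_cont := hf.continuous
  have hT_cont := hT.continuous
  have hT'_cont := hT.continuous_deriv
  have hα : 0 ≤ 2 + 1 / k := by positivity
  have hw : 0 ≤ 2 * k := by positivity
  have hβ : 0 ≤ (2 * k + 1) / (2 * k + 2) := by positivity
  have slice (t) (ht : t ∈ Icc a b) := entropy_le_slice hk hc hcd
    (h' := fun y ↦ fderiv ℝ f (t, y) (0, 1)) (Γ := fun y ↦ G (T t, y))
    (fun y _ ↦ hasDerivAt_snd_of_contDiff hf t y) (by fun_prop) (hfc t) (hfd t) (by fun_prop)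
    (fun y _ ↦ hG₀ _) (hT.deriv_nonneg t) (hT.deriv_mul t ht).symm hε
  have hS : Continuous fun t ↦
      ∫ y in c..d, G (t, y) ^ ((2 * k + 1) / (2 * k + 2)) * y ^ (2 * k) := by
    fun_prop (disch := assumption)
  have hZ : Continuous fun t ↦ ∫ y in c..d, y ^ 2 * G (t, y) * y ^ (2 * k) := by
    fun_prop (disch := assumption)
  have hV : Continuous fun t ↦ deriv T t * ∫ y in c..d, |f (t, y)| ^ (2 + 1 / k) * y ^ (2 * k) := by
    fun_prop (disch := assumption)
  have hE : Continuous fun t ↦ ∫ y in c..d, fderiv ℝ f (t, y) (0, 1) ^ 2 * y ^ (2 * k) := by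
    fun_prop (disch := assumption)
  have hcomp {H : ℝ → ℝ} (hH : Continuous H) : Continuous fun t ↦ H (T t) * deriv T t :=
    (hH.comp hT_cont).mul hT'_cont
  rw [← hT.integral_comp_mul_deriv hab hS.continuousOn,
    ← hT.integral_comp_mul_deriv hab hZ.continuousOn, mul_add, ← mul_assoc, ← mul_assoc]
  refine intervalIntegral_mono_of_linear_le hab (hcomp hS) hV hE (hcomp hZ) fun t ht ↦ ?_
  linear_combination slice t ht

end Box

theorem sq_le_four_mul_of_forall_le {X E Z : ℝ} (hX : 0 ≤ X) (hE : 0 ≤ E) (hZ : 0 ≤ Z)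
    (h : ∀ ε > 0, X ≤ ε * E + ε⁻¹ * Z) : X ^ 2 ≤ 4 * (E * Z) := by
  have hquad (ε : ℝ) : 0 ≤ E * (ε * ε) + -X * ε + Z := by
    rcases le_or_gt ε 0 with hε | hε
    · nlinarith [mul_nonneg hE (mul_self_nonneg ε), mul_nonneg hX (neg_nonneg.2 hε)]
    · have := mul_le_mul_of_nonneg_left (h ε hε) hε.le
      rw [mul_add, mul_inv_cancel_left₀ hε.ne'] at this
      linarith
  have := discrim_le_zero hquad
  rw [discrim] at this
  linarith

/-- The squared Euclidean norm `|∂ₜf|² + |∂_y f|²` of the gradient of `f` on the `(t, y)`-plane. -/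
noncomputable def gradSq (f : ℝ × ℝ → ℝ) (z : ℝ × ℝ) : ℝ :=
  fderiv ℝ f z (1, 0) ^ 2 + fderiv ℝ f z (0, 1) ^ 2

section BoxDuality

variable {a b c d k ε : ℝ} {f G : ℝ × ℝ → ℝ}

theorem gradSq_nonneg (f : ℝ × ℝ → ℝ) (z : ℝ × ℝ) : 0 ≤ gradSq f z := by
  unfold gradSq; positivity

theorem continuous_gradSq (hf : ContDiff ℝ 1 f) : Continuous (gradSq f) :=
  ((continuous_fderiv_apply_of_contDiff hf _).pow 2).add
    ((continuous_fderiv_apply_of_contDiff hf _).pow 2)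

theorem setIntegral_Icc_prod_Icc {F : ℝ × ℝ → ℝ} (hab : a ≤ b) (hcd : c ≤ d) (hF : Continuous F) :
    ∫ z in Icc a b ×ˢ Icc c d, F z = ∫ t in a..b, ∫ y in c..d, F (t, y) := by
  rw [Measure.volume_eq_prod, setIntegral_prod _
    (hF.continuousOn.integrableOn_compact (isCompact_Icc.prod isCompact_Icc))]
  simp only [intervalIntegral.integral_of_le hab, intervalIntegral.integral_of_le hcd,
    integral_Icc_eq_integral_Ioc]

theorem integrableOn_Icc_prod_Icc {F : ℝ × ℝ → ℝ} (hF : Continuous F) :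
    IntegrableOn F (Icc a b ×ˢ Icc c d) :=
  hF.continuousOn.integrableOn_compact (isCompact_Icc.prod isCompact_Icc)

theorem setIntegral_Icc_prod_Icc_pos {F : ℝ × ℝ → ℝ} (hab : a < b) (hcd : c < d)
    (hF : Continuous F) (hF₀ : ∀ z ∈ Icc a b ×ˢ Icc c d, 0 < F z) :
    0 < ∫ z in Icc a b ×ˢ Icc c d, F z := by
  rw [setIntegral_Icc_prod_Icc hab.le hcd.le hF]
  refine intervalIntegral.intervalIntegral_pos_of_pos_on
    (Continuous.intervalIntegrable (by fun_prop) _ _) (fun t ht ↦ ?_) hab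
  exact intervalIntegral.intervalIntegral_pos_of_pos_on
    (Continuous.intervalIntegrable (by fun_prop) _ _)
    (fun y hy ↦ hF₀ (t, y) ⟨Ioo_subset_Icc_self ht, Ioo_subset_Icc_self hy⟩) hcd

theorem exists_isTransport_marginals {a' b' c' d' : ℝ} {P Q : ℝ × ℝ → ℝ} (hab : a ≤ b)
    (hcd : c ≤ d) (hab' : a' ≤ b') (hcd' : c' < d') (hP : Continuous P) (hQ : Continuous Q)
    (hP₀ : ∀ z ∈ Icc a b ×ˢ Icc c d, 0 ≤ P z) (hQ₀ : ∀ z ∈ Icc a' b' ×ˢ Icc c' d', 0 < Q z)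
    (hmass : ∫ z in Icc a b ×ˢ Icc c d, P z = ∫ z in Icc a' b' ×ˢ Icc c' d', Q z) :
    ∃ T, IsTransport (fun t ↦ ∫ y in c..d, P (t, y)) (fun t ↦ ∫ y in c'..d', Q (t, y))
      T a b a' b' := by
  rw [setIntegral_Icc_prod_Icc hab hcd hP, setIntegral_Icc_prod_Icc hab' hcd'.le hQ] at hmass
  exact exists_isTransport hab hab' (Continuous.continuousOn (by fun_prop))
    (fun t ht ↦ intervalIntegral.integral_nonneg hcd fun y hy ↦ hP₀ (t, y) ⟨ht, hy⟩)
    (Continuous.continuousOn (by fun_prop))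
    (fun t ht ↦ intervalIntegral.intervalIntegral_pos_of_pos_on
      (Continuous.intervalIntegrable (by fun_prop) _ _)
      (fun y hy ↦ hQ₀ (t, y) ⟨ht, Ioo_subset_Icc_self hy⟩) hcd') hmass

theorem setIntegral_mul_rpow_nonneg {s : Set (ℝ × ℝ)} {F : ℝ × ℝ → ℝ} (hs : MeasurableSet s)
    (hF : ∀ z ∈ s, 0 ≤ F z) (hs₀ : ∀ z ∈ s, 0 ≤ z.2) (q : ℝ) :
    0 ≤ ∫ z in s, F z * z.2 ^ q :=
  setIntegral_nonneg hs fun z hz ↦ mul_nonneg (hF z hz) (Real.rpow_nonneg (hs₀ z hz) q)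

theorem entropy_le_of_mass_eq (hk : 0 < k) (hε : 0 < ε) (hab : a ≤ b) (hc : 0 < c) (hcd : c < d)
    (hf : ContDiff ℝ 1 f) (hf₀ : ∀ z ∉ Ioo a b ×ˢ Ioo c d, f z = 0)
    (hG : Continuous G) (hG₀ : ∀ z, 0 < G z)
    (hmass : ∫ z in Icc a b ×ˢ Icc c d, |f z| ^ (2 + 2 / k) * z.2 ^ (2 * k)
      = ∫ z in Icc a b ×ˢ Icc c d, G z * z.2 ^ (2 * k)) :
    (2 * k + 2) * (∫ z in Icc a b ×ˢ Icc c d, G z ^ ((2 * k + 1) / (2 * k + 2)) * z.2 ^ (2 * k)) ≤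
      (2 + 1 / k) / 2 * (ε * (∫ z in Icc a b ×ˢ Icc c d, gradSq f z * z.2 ^ (2 * k))
        + ε⁻¹ * ∫ z in Icc a b ×ˢ Icc c d, (z.1 ^ 2 + z.2 ^ 2) * G z * z.2 ^ (2 * k)) := by
  have hf_cont := hf.continuous
  have hp : 0 ≤ 2 + 2 / k := by positivity
  have hw : 0 ≤ 2 * k := by positivity
  have hβ : 0 ≤ (2 * k + 1) / (2 * k + 2) := by positivity
  have hα : 1 < 2 + 1 / k := by linarith [one_div_pos.2 hk]
  have box {F : ℝ × ℝ → ℝ} (hF : Continuous F) := setIntegral_Icc_prod_Icc hab hcd.le hF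
  have hW₀ (y : ℝ) (hy : y ∈ Icc c d) : 0 < y ^ (2 * k) := Real.rpow_pos_of_pos (hc.trans_le hy.1) _
  obtain ⟨T, hT⟩ := exists_isTransport_marginals hab hcd.le hab hcd
    (by fun_prop (disch := assumption)) (by fun_prop (disch := assumption))
    (fun z hz ↦ mul_nonneg (Real.rpow_nonneg (abs_nonneg _) _) (hW₀ _ hz.2).le)
    (fun z hz ↦ mul_pos (hG₀ z) (hW₀ _ hz.2)) hmass
  have horizontal := integral_deriv_mul_abs_rpow_le hα hε hab hcd.le hf
    (fun y ↦ hf₀ (a, y) (by simp)) (fun y ↦ hf₀ (b, y) (by simp)) hT.contDiff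
    (W := fun y ↦ y ^ (2 * k)) (by fun_prop (disch := assumption)) fun y hy ↦ (hW₀ y hy).le
  have vertical := integral_entropy_le hk hε hab hc hcd.le hf
    (fun t ↦ hf₀ (t, c) (by simp)) (fun t ↦ hf₀ (t, d) (by simp)) hG hG₀ hT
  have moment : ∫ t in a..b, T t ^ 2 * ∫ y in c..d, |f (t, y)| ^ (2 * (2 + 1 / k - 1)) * y ^ (2 * k)
      = ∫ z in Icc a b ×ˢ Icc c d, z.1 ^ 2 * G z * z.2 ^ (2 * k) := by
    rw [box (by fun_prop (disch := assumption)), show 2 * (2 + 1 / k - 1) = 2 + 2 / k by ring,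
      hT.integral_comp_mul hab (H := fun s ↦ s ^ 2) (by fun_prop)
        (Continuous.continuousOn (by fun_prop (disch := assumption)))]
    simp only [← intervalIntegral.integral_const_mul, mul_assoc]
  rw [moment] at horizontal
  rw [← box (F := fun z ↦ fderiv ℝ f z (1, 0) ^ 2 * z.2 ^ (2 * k))
    (by fun_prop (disch := assumption))] at horizontal
  rw [← box (F := fun z ↦ fderiv ℝ f z (0, 1) ^ 2 * z.2 ^ (2 * k))
      (by fun_prop (disch := assumption)),
    ← box (F := fun z ↦ z.2 ^ 2 * G z * z.2 ^ (2 * k)) (by fun_prop (disch := assumption)),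
    ← box (F := fun z ↦ G z ^ ((2 * k + 1) / (2 * k + 2)) * z.2 ^ (2 * k))
      (by fun_prop (disch := assumption))] at vertical
  simp only [gradSq, add_mul]
  rw [integral_add (integrableOn_Icc_prod_Icc (by fun_prop (disch := assumption)))
      (integrableOn_Icc_prod_Icc (by fun_prop (disch := assumption))),
    integral_add (integrableOn_Icc_prod_Icc (by fun_prop (disch := assumption)))
      (integrableOn_Icc_prod_Icc (by fun_prop (disch := assumption)))]
  linear_combination horizontal + vertical

theorem entropy_sq_le_of_mass_eq (hk : 0 < k) (hab : a ≤ b) (hc : 0 < c) (hcd : c < d)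
    (hf : ContDiff ℝ 1 f) (hf₀ : ∀ z ∉ Ioo a b ×ˢ Ioo c d, f z = 0)
    (hG : Continuous G) (hG₀ : ∀ z, 0 < G z)
    (hmass : ∫ z in Icc a b ×ˢ Icc c d, |f z| ^ (2 + 2 / k) * z.2 ^ (2 * k)
      = ∫ z in Icc a b ×ˢ Icc c d, G z * z.2 ^ (2 * k)) :
    ((2 * k + 2)
        * ∫ z in Icc a b ×ˢ Icc c d, G z ^ ((2 * k + 1) / (2 * k + 2)) * z.2 ^ (2 * k)) ^ 2 ≤
      (2 + 1 / k) ^ 2 * ((∫ z in Icc a b ×ˢ Icc c d, gradSq f z * z.2 ^ (2 * k))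
        * ∫ z in Icc a b ×ˢ Icc c d, (z.1 ^ 2 + z.2 ^ 2) * G z * z.2 ^ (2 * k)) := by
  have hQ : MeasurableSet (Icc a b ×ˢ Icc c d) := measurableSet_Icc.prod measurableSet_Icc
  have nonneg {F : ℝ × ℝ → ℝ} (hF : ∀ z, 0 ≤ F z) :=
    setIntegral_mul_rpow_nonneg hQ (fun z _ ↦ hF z) (fun z hz ↦ hc.le.trans hz.2.1) (2 * k)
  have hS₀ := nonneg fun z ↦ Real.rpow_nonneg (hG₀ z).le ((2 * k + 1) / (2 * k + 2))
  have hE₀ := nonneg (gradSq_nonneg f)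
  have hZ₀ := nonneg fun z ↦ mul_nonneg (add_nonneg (sq_nonneg z.1) (sq_nonneg z.2)) (hG₀ z).le
  have := sq_le_four_mul_of_forall_le (mul_nonneg (by positivity) hS₀)
    (mul_nonneg (by positivity : 0 ≤ (2 + 1 / k) / 2) hE₀)
    (mul_nonneg (by positivity : 0 ≤ (2 + 1 / k) / 2) hZ₀) fun ε hε ↦
      (entropy_le_of_mass_eq hk hε hab hc hcd hf hf₀ hG hG₀ hmass).trans_eq (by ring)
  linear_combination this

theorem massRatio_rpow_mul_entropy_sq_le (hk : 0 < k) (hab : a < b) (hc : 0 < c) (hcd : c < d)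
    (hf : ContDiff ℝ 1 f) (hf₀ : ∀ z ∉ Ioo a b ×ˢ Ioo c d, f z = 0)
    (hG : Continuous G) (hG₀ : ∀ z, 0 < G z) :
    ((∫ z in Icc a b ×ˢ Icc c d, |f z| ^ (2 + 2 / k) * z.2 ^ (2 * k))
        / ∫ z in Icc a b ×ˢ Icc c d, G z * z.2 ^ (2 * k)) ^ (k / (k + 1))
      * ((2 * k + 2)
        * ∫ z in Icc a b ×ˢ Icc c d, G z ^ ((2 * k + 1) / (2 * k + 2)) * z.2 ^ (2 * k)) ^ 2 ≤
      (2 + 1 / k) ^ 2 * ((∫ z in Icc a b ×ˢ Icc c d, gradSq f z * z.2 ^ (2 * k))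
        * ∫ z in Icc a b ×ˢ Icc c d, (z.1 ^ 2 + z.2 ^ 2) * G z * z.2 ^ (2 * k)) := by
  set m := ∫ z in Icc a b ×ˢ Icc c d, |f z| ^ (2 + 2 / k) * z.2 ^ (2 * k)
  set M := ∫ z in Icc a b ×ˢ Icc c d, G z * z.2 ^ (2 * k)
  have hQ : MeasurableSet (Icc a b ×ˢ Icc c d) := measurableSet_Icc.prod measurableSet_Icc
  have nonneg {F : ℝ × ℝ → ℝ} (hF : ∀ z, 0 ≤ F z) :=
    setIntegral_mul_rpow_nonneg hQ (fun z _ ↦ hF z) (fun z hz ↦ hc.le.trans hz.2.1) (2 * k)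
  have hm : 0 ≤ m := nonneg fun z ↦ Real.rpow_nonneg (abs_nonneg _) _
  have hM : 0 < M := setIntegral_Icc_prod_Icc_pos hab hcd
    (hG.mul (continuous_snd.rpow_const fun _ ↦ Or.inr (by positivity)))
    fun z hz ↦ mul_pos (hG₀ z) (Real.rpow_pos_of_pos (hc.trans_le hz.2.1) _)
  rcases hm.eq_or_lt with hm | hm
  · rw [← hm, zero_div, Real.zero_rpow (by positivity), zero_mul]
    exact mul_nonneg (sq_nonneg _) <| mul_nonneg (nonneg (gradSq_nonneg f)) <|
      nonneg fun z ↦ mul_nonneg (add_nonneg (sq_nonneg z.1) (sq_nonneg z.2)) (hG₀ z).le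
  set σ := m / M
  have hσ : 0 < σ := div_pos hm hM
  have key := entropy_sq_le_of_mass_eq (G := fun z ↦ σ * G z) hk hab.le hc hcd hf hf₀
    (hG.const_mul σ) (fun z ↦ mul_pos hσ (hG₀ z)) (by
      simp only [mul_assoc, integral_const_mul]
      exact (div_mul_cancel₀ m hM.ne').symm)
  simp only [Real.mul_rpow hσ.le (hG₀ _).le, mul_left_comm _ σ, mul_assoc, integral_const_mul]
    at key
  have hexp : (σ ^ ((2 * k + 1) / (2 * k + 2))) ^ 2 = σ * σ ^ (k / (k + 1)) := by
    rw [← Real.rpow_mul_natCast hσ.le, ← Real.rpow_one_add' hσ.le (by positivity)]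
    congr 1
    field_simp
    push_cast
    ring
  refine le_of_mul_le_mul_left ?_ hσ
  simp only [mul_assoc] at key ⊢
  linear_combination key - hexp * ((2 * k + 2)
    * ∫ z in Icc a b ×ˢ Icc c d, G z ^ ((2 * k + 1) / (2 * k + 2)) * z.2 ^ (2 * k)) ^ 2

end BoxDuality

/-- The upper half-plane `{(t, y) | 0 < y}`, as a subset of `ℝ × ℝ`. -/
abbrev halfPlane : Set (ℝ × ℝ) := {q | 0 < q.2}

/-- An increasing sequence of compact boxes in the half-plane, indexed so that already the zeroth
box has nonempty interior. -/
def exhaustingBox (N : ℕ) : Set (ℝ × ℝ) :=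
  Icc (-((N : ℝ) + 2)) (N + 2) ×ˢ Icc ((N : ℝ) + 2)⁻¹ (N + 2)

section HalfPlane

variable {k : ℝ} {f F G : ℝ × ℝ → ℝ}

theorem isOpen_halfPlane : IsOpen halfPlane := isOpen_lt continuous_const continuous_snd

theorem interior_exhaustingBox (N : ℕ) : interior (exhaustingBox N)
    = Ioo (-((N : ℝ) + 2)) (N + 2) ×ˢ Ioo ((N : ℝ) + 2)⁻¹ (N + 2) := by
  rw [exhaustingBox, interior_prod_eq, interior_Icc, interior_Icc]

theorem exhaustingBox_subset_halfPlane (N : ℕ) : exhaustingBox N ⊆ halfPlane :=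
  fun _ hz ↦ lt_of_lt_of_le (by positivity) hz.2.1

theorem monotone_exhaustingBox : Monotone exhaustingBox := fun N M hNM ↦ by
  have h : (N : ℝ) ≤ M := mod_cast hNM
  exact prod_mono (Icc_subset_Icc (by linarith) (by linarith))
    (Icc_subset_Icc (inv_anti₀ (by positivity) (by linarith)) (by linarith))

theorem halfPlane_subset_iUnion_interior : halfPlane ⊆ ⋃ N, interior (exhaustingBox N) := by
  intro z (hz : 0 < z.2)
  obtain ⟨N, hN⟩ := exists_nat_gt (max |z.1| (max z.2 z.2⁻¹))
  simp only [max_lt_iff, abs_lt] at hN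
  rw [mem_iUnion]
  refine ⟨N, ?_⟩
  rw [interior_exhaustingBox]
  refine ⟨⟨by linarith, by linarith⟩, ?_, by linarith⟩
  rw [inv_lt_comm₀ (by positivity) hz]
  linarith

theorem iUnion_exhaustingBox : ⋃ N, exhaustingBox N = halfPlane :=
  (iUnion_subset exhaustingBox_subset_halfPlane).antisymm <|
    halfPlane_subset_iUnion_interior.trans (iUnion_mono fun _ ↦ interior_subset)

theorem eventually_subset_interior_exhaustingBox {K : Set (ℝ × ℝ)} (hK : IsCompact K)
    (hKH : K ⊆ halfPlane) : ∀ᶠ N in atTop, K ⊆ interior (exhaustingBox N) := by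
  have hmono : Monotone fun N ↦ interior (exhaustingBox N) :=
    fun _ _ h ↦ interior_mono (monotone_exhaustingBox h)
  obtain ⟨N, hN⟩ := hK.elim_directed_cover _ (fun _ ↦ isOpen_interior)
    (hKH.trans halfPlane_subset_iUnion_interior) hmono.directed_le
  exact eventually_atTop.2 ⟨N, fun _ h ↦ hN.trans (hmono h)⟩

theorem tendsto_setIntegral_exhaustingBox (hF : IntegrableOn F halfPlane) :
    Tendsto (fun N ↦ ∫ z in exhaustingBox N, F z) atTop (𝓝 (∫ z in halfPlane, F z)) := by
  rw [← iUnion_exhaustingBox] at hF ⊢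
  exact tendsto_setIntegral_of_monotone
    (fun _ ↦ measurableSet_Icc.prod measurableSet_Icc) monotone_exhaustingBox hF

theorem setIntegral_halfPlane_pos (hF : IntegrableOn F halfPlane)
    (hF₀ : ∀ z ∈ halfPlane, 0 < F z) : 0 < ∫ z in halfPlane, F z := by
  have hH := isOpen_halfPlane.measurableSet
  rw [setIntegral_pos_iff_support_of_nonneg_ae
    ((ae_restrict_mem hH).mono fun z hz ↦ (hF₀ z hz).le) hF,
    inter_eq_right.2 fun z hz ↦ Function.mem_support.2 (hF₀ z hz).ne']
  exact isOpen_halfPlane.measure_pos _ ⟨(0, 1), show (0 : ℝ) < 1 from one_pos⟩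

theorem massRatio_rpow_mul_entropy_sq_le_halfPlane (hk : 0 < k) (hf : ContDiff ℝ 1 f)
    (hf_supp : HasCompactSupport f) (hf_H : tsupport f ⊆ halfPlane)
    (hG : Continuous G) (hG₀ : ∀ z, 0 < G z)
    (hM : IntegrableOn (fun z ↦ G z * z.2 ^ (2 * k)) halfPlane)
    (hS : IntegrableOn (fun z ↦ G z ^ ((2 * k + 1) / (2 * k + 2)) * z.2 ^ (2 * k)) halfPlane)
    (hZ : IntegrableOn (fun z ↦ (z.1 ^ 2 + z.2 ^ 2) * G z * z.2 ^ (2 * k)) halfPlane) :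
    ((∫ z in halfPlane, |f z| ^ (2 + 2 / k) * z.2 ^ (2 * k))
        / ∫ z in halfPlane, G z * z.2 ^ (2 * k)) ^ (k / (k + 1))
      * ((2 * k + 2)
        * ∫ z in halfPlane, G z ^ ((2 * k + 1) / (2 * k + 2)) * z.2 ^ (2 * k)) ^ 2 ≤
      (2 + 1 / k) ^ 2 * ((∫ z in halfPlane, gradSq f z * z.2 ^ (2 * k))
        * ∫ z in halfPlane, (z.1 ^ 2 + z.2 ^ 2) * G z * z.2 ^ (2 * k)) := by
  have hM₀ := setIntegral_halfPlane_pos hM fun z hz ↦ mul_pos (hG₀ z) (Real.rpow_pos_of_pos hz _)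
  refine le_of_tendsto_of_tendsto
    (((tendsto_const_nhds.div (tendsto_setIntegral_exhaustingBox hM) hM₀.ne').rpow_const
      (Or.inr (by positivity))).mul
        (((tendsto_setIntegral_exhaustingBox hS).const_mul _).pow 2))
    (((tendsto_setIntegral_exhaustingBox hZ).const_mul _).const_mul _) ?_
  filter_upwards [eventually_subset_interior_exhaustingBox hf_supp hf_H] with N hN
  have hgrad (z) (hz : z ∉ exhaustingBox N) : gradSq f z = 0 := by
    have : fderiv ℝ f z = 0 := image_eq_zero_of_notMem_tsupport fun h ↦
      hz (interior_subset (hN (tsupport_fderiv_subset ℝ h)))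
    simp [gradSq, this]
  have hf₀ (z) (hz : z ∉ interior (exhaustingBox N)) : f z = 0 :=
    image_eq_zero_of_notMem_tsupport fun h ↦ hz (hN h)
  have restrict {F : ℝ × ℝ → ℝ} (hF : ∀ z ∉ exhaustingBox N, F z = 0) :
      ∫ z in halfPlane, F z = ∫ z in exhaustingBox N, F z :=
    setIntegral_eq_of_subset_of_forall_sdiff_eq_zero isOpen_halfPlane.measurableSet
      (exhaustingBox_subset_halfPlane N) fun z hz ↦ hF z hz.2
  have hp : 2 + 2 / k ≠ 0 := by positivity
  rw [restrict (F := fun z ↦ gradSq f z * z.2 ^ (2 * k)) fun z hz ↦ by rw [hgrad z hz, zero_mul],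
    restrict (F := fun z ↦ |f z| ^ (2 + 2 / k) * z.2 ^ (2 * k)) fun z hz ↦ by
      rw [hf₀ z fun h ↦ hz (interior_subset h), abs_zero, Real.zero_rpow hp, zero_mul]]
  have hinv : ((N : ℝ) + 2)⁻¹ < 1 := inv_lt_one_of_one_lt₀ (by linarith [N.cast_nonneg (α := ℝ)])
  exact massRatio_rpow_mul_entropy_sq_le hk (by linarith [N.cast_nonneg (α := ℝ)]) (by positivity)
    (by linarith [N.cast_nonneg (α := ℝ)]) hf (interior_exhaustingBox N ▸ hf₀) hG hG₀

end HalfPlane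

/-- The bubble `(1 + t² + y²)^(-q)`. For `q = 2 * k + 2` it is the density `|f|^(2 + 2/k)` of the
extremal function `f = (1 + t² + y²)^(-k)` of the Sobolev inequality with weight `y^(2 * k)`. -/
noncomputable abbrev bubble (q : ℝ) (z : ℝ × ℝ) : ℝ := (1 + z.1 ^ 2 + z.2 ^ 2) ^ (-q)

section Bubble

variable {q w r x k : ℝ}

theorem lintegral_ofReal_eq_of_integral_eq {α : Type*} [MeasurableSpace α] {μ : Measure α}
    {f : α → ℝ} {v : ℝ} (hf : 0 ≤ᵐ[μ] f) (hv : 0 < v) (h : ∫ x, f x ∂μ = v) :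
    ∫⁻ x, ENNReal.ofReal (f x) ∂μ = ENNReal.ofReal v := by
  rw [← h, ofReal_integral_eq_lintegral_ofReal (.of_integral_ne_zero (h.trans_ne hv.ne')) hf]

theorem lintegral_Ioi_rpow_mul_exp_neg_mul (hq : 0 < q) (hr : 0 < r) :
    ∫⁻ x in Ioi 0, ENNReal.ofReal (x ^ (q - 1) * Real.exp (-(r * x)))
      = ENNReal.ofReal (Real.Gamma q * r ^ (-q)) := by
  refine lintegral_ofReal_eq_of_integral_eq ?_ (by positivity [Real.Gamma_pos_of_pos hq]) ?_
  · filter_upwards [ae_restrict_mem measurableSet_Ioi] with x (hx : 0 < x)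
    positivity
  · rw [Real.integral_rpow_mul_exp_neg_mul_Ioi hq hr, one_div, Real.inv_rpow hr.le,
      Real.rpow_neg hr.le, mul_comm]

theorem volume_restrict_halfPlane :
    (volume : Measure (ℝ × ℝ)).restrict halfPlane = volume.prod (volume.restrict (Ioi 0)) := by
  have : halfPlane = univ ×ˢ Ioi 0 := by ext; simp
  rw [this, Measure.volume_eq_prod, ← Measure.prod_restrict, Measure.restrict_univ]

theorem lintegral_halfPlane_gaussian_mul_rpow (hx : 0 < x) (hw : -1 < w) :
    ∫⁻ z in halfPlane, ENNReal.ofReal (Real.exp (-x * z.1 ^ 2))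
        * ENNReal.ofReal (z.2 ^ w * Real.exp (-x * z.2 ^ (2 : ℝ)))
      = ENNReal.ofReal (√Real.pi * Real.Gamma ((w + 1) / 2) / 2 * x ^ (-(w / 2 + 1))) := by
  have hΓ : 0 < Real.Gamma ((w + 1) / 2) := Real.Gamma_pos_of_pos (by linarith)
  have horizontal : ∫⁻ t, ENNReal.ofReal (Real.exp (-x * t ^ 2)) = ENNReal.ofReal √(Real.pi / x) :=
    lintegral_ofReal_eq_of_integral_eq (.of_forall fun _ ↦ by positivity) (by positivity)
      (integral_gaussian x)
  have vertical := lintegral_ofReal_eq_of_integral_eq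
    ((ae_restrict_mem measurableSet_Ioi).mono fun y (hy : 0 < y) ↦ by positivity)
    (by positivity) (integral_rpow_mul_exp_neg_mul_rpow two_pos hw hx)
  rw [volume_restrict_halfPlane, lintegral_prod_mul
      (f := fun t ↦ ENNReal.ofReal (Real.exp (-x * t ^ 2)))
      (g := fun y ↦ ENNReal.ofReal (y ^ w * Real.exp (-x * y ^ (2 : ℝ))))
      (by fun_prop) (by fun_prop), horizontal,
    vertical, ← ENNReal.ofReal_mul (by positivity), Real.sqrt_div' _ hx.le, Real.sqrt_eq_rpow x]
  congr 1
  rw [show -(w / 2 + 1) = -(w + 1) / 2 - 1 / 2 by ring, Real.rpow_sub hx]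
  ring

theorem lintegral_halfPlane_bubble_mul_rpow (hw : -1 < w) (hq : w / 2 + 1 < q) :
    ∫⁻ z in halfPlane,
        ENNReal.ofReal (Real.Gamma q * bubble q z * z.2 ^ w)
      = ENNReal.ofReal
        (√Real.pi * Real.Gamma ((w + 1) / 2) / 2 * Real.Gamma (q - (w / 2 + 1))) := by
  have hΓ : 0 < Real.Gamma ((w + 1) / 2) := Real.Gamma_pos_of_pos (by linarith)
  -- Writing `Γ(q) * ρ ^ (-q)` as `∫ x ^ (q - 1) * exp (-ρ * x)` separates `t` from `y`.
  calc
    _ = ∫⁻ z in halfPlane, ∫⁻ x in Ioi (0 : ℝ),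
          ENNReal.ofReal (x ^ (q - 1) * Real.exp (-x)) *
            (ENNReal.ofReal (Real.exp (-x * z.1 ^ 2))
              * ENNReal.ofReal (z.2 ^ w * Real.exp (-x * z.2 ^ (2 : ℝ)))) := by
      refine setLIntegral_congr_fun isOpen_halfPlane.measurableSet fun z (hz : 0 < z.2) ↦ ?_
      rw [mul_comm, ENNReal.ofReal_mul (by positivity),
        ← lintegral_Ioi_rpow_mul_exp_neg_mul (by linarith) (by positivity),
        ← lintegral_const_mul _ (by fun_prop)]
      refine setLIntegral_congr_fun measurableSet_Ioi fun x (hx : 0 < x) ↦ ?_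
      simp only [← ENNReal.ofReal_mul (Real.exp_nonneg _),
        ← ENNReal.ofReal_mul (Real.rpow_nonneg hz.le _),
        ← ENNReal.ofReal_mul (mul_nonneg (Real.rpow_nonneg hx.le _) (Real.exp_nonneg _))]
      rw [Real.rpow_two, show -((1 + z.1 ^ 2 + z.2 ^ 2) * x) = -x + -x * z.1 ^ 2 + -x * z.2 ^ 2 by
        ring, Real.exp_add, Real.exp_add]
      congr 1
      ring
    _ = ∫⁻ x in Ioi (0 : ℝ), ENNReal.ofReal (x ^ (q - 1) * Real.exp (-x)) *
          ENNReal.ofReal (√Real.pi * Real.Gamma ((w + 1) / 2) / 2 * x ^ (-(w / 2 + 1))) := by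
      rw [lintegral_lintegral_swap (by unfold Function.uncurry; fun_prop)]
      refine setLIntegral_congr_fun measurableSet_Ioi fun x (hx : 0 < x) ↦ ?_
      rw [lintegral_const_mul _ (by fun_prop), lintegral_halfPlane_gaussian_mul_rpow hx hw]
    _ = ∫⁻ x in Ioi (0 : ℝ), ENNReal.ofReal (√Real.pi * Real.Gamma ((w + 1) / 2) / 2) *
          ENNReal.ofReal (x ^ (q - (w / 2 + 1) - 1) * Real.exp (-(1 * x))) := by
      refine setLIntegral_congr_fun measurableSet_Ioi fun x (hx : 0 < x) ↦ ?_
      rw [← ENNReal.ofReal_mul (by positivity), ← ENNReal.ofReal_mul (by positivity), one_mul,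
        show q - (w / 2 + 1) - 1 = q - 1 + -(w / 2 + 1) by ring, Real.rpow_add hx]
      congr 1
      ring
    _ = _ := by
      rw [lintegral_const_mul _ (by fun_prop),
        lintegral_Ioi_rpow_mul_exp_neg_mul (by linarith) one_pos, Real.one_rpow, mul_one,
        ENNReal.ofReal_mul (by positivity)]

theorem integrableOn_halfPlane_bubble_mul_rpow (hw : -1 < w) (hq : w / 2 + 1 < q) :
    IntegrableOn (fun z ↦ bubble q z * z.2 ^ w) halfPlane := by
  have hΓq : 0 < Real.Gamma q := Real.Gamma_pos_of_pos (by linarith)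
  have hfin := lintegral_halfPlane_bubble_mul_rpow hw hq
  have hint : IntegrableOn (fun z ↦ Real.Gamma q * bubble q z * z.2 ^ w)
      halfPlane := by
    refine ⟨(by fun_prop : Measurable _).aestronglyMeasurable, ?_⟩
    rw [hasFiniteIntegral_iff_ofReal, hfin]
    · exact ENNReal.ofReal_lt_top
    · filter_upwards [ae_restrict_mem isOpen_halfPlane.measurableSet] with z (hz : 0 < z.2)
      positivity
  simpa only [IntegrableOn, mul_assoc, inv_mul_cancel_left₀ hΓq.ne'] using
    hint.const_mul (Real.Gamma q)⁻¹

theorem Gamma_mul_integral_halfPlane_bubble_mul_rpow (hw : -1 < w) (hq : w / 2 + 1 < q) :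
    Real.Gamma q * ∫ z in halfPlane, bubble q z * z.2 ^ w
      = √Real.pi * Real.Gamma ((w + 1) / 2) / 2 * Real.Gamma (q - (w / 2 + 1)) := by
  have hΓ : 0 < Real.Gamma ((w + 1) / 2) := Real.Gamma_pos_of_pos (by linarith)
  have hΓq : 0 < Real.Gamma q := Real.Gamma_pos_of_pos (by linarith)
  rw [← integral_const_mul]
  simp only [← mul_assoc]
  rw [integral_eq_lintegral_of_nonneg_ae _ (by fun_prop : Measurable _).aestronglyMeasurable,
    lintegral_halfPlane_bubble_mul_rpow hw hq, ENNReal.toReal_ofReal (by positivity)]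
  filter_upwards [ae_restrict_mem isOpen_halfPlane.measurableSet] with z (hz : 0 < z.2)
  positivity

theorem Gamma_two_mul_add_two (hk : 0 < k) :
    Real.Gamma (2 * k + 2) = (2 * k + 1) * Real.Gamma (2 * k + 1) := by
  rw [← Real.Gamma_add_one (by positivity)]
  ring_nf

theorem integral_halfPlane_bubble_two_mul_add_one (hk : 0 < k) :
    ∫ z in halfPlane, bubble (2 * k + 1) z * z.2 ^ (2 * k)
      = (2 + 1 / k)
        * ∫ z in halfPlane, bubble (2 * k + 2) z * z.2 ^ (2 * k) := by
  have h₁ := Gamma_mul_integral_halfPlane_bubble_mul_rpow (q := 2 * k + 1) (w := 2 * k)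
    (by linarith) (by linarith)
  have h₂ := Gamma_mul_integral_halfPlane_bubble_mul_rpow (q := 2 * k + 2) (w := 2 * k)
    (by linarith) (by linarith)
  rw [show 2 * k + 1 - (2 * k / 2 + 1) = k by ring] at h₁
  rw [show 2 * k + 2 - (2 * k / 2 + 1) = k + 1 by ring, Real.Gamma_add_one hk.ne',
    Gamma_two_mul_add_two hk] at h₂
  have hΓ : Real.Gamma (2 * k + 1) ≠ 0 := (Real.Gamma_pos_of_pos (by linarith)).ne'
  refine mul_left_cancel₀ (mul_ne_zero hk.ne' hΓ) ?_
  have hcancel : k * (2 + 1 / k) = 2 * k + 1 := by field_simp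
  linear_combination k * h₁ - h₂ - Real.Gamma (2 * k + 1) * hcancel
    * ∫ z in halfPlane, bubble (2 * k + 2) z * z.2 ^ (2 * k)

theorem integral_halfPlane_bubble_two_mul_add_two (hk : 0 < k) :
    ∫ z in halfPlane, bubble (2 * k + 2) z * z.2 ^ (2 * k)
      = 2 * Real.pi / (2 ^ (2 * k + 2) * (2 * k + 1)) := by
  have h := Gamma_mul_integral_halfPlane_bubble_mul_rpow (q := 2 * k + 2) (w := 2 * k)
    (by linarith) (by linarith)
  have duplication := Real.Gamma_mul_Gamma_add_half (k + 1 / 2)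
  have hΓ : Real.Gamma (2 * k + 1) ≠ 0 := (Real.Gamma_pos_of_pos (by linarith)).ne'
  have hpow : (2 : ℝ) ^ (-(2 * k)) = 4 / 2 ^ (2 * k + 2) := by
    rw [show -(2 * k) = 2 - (2 * k + 2) by ring, Real.rpow_sub two_pos]
    norm_num
  rw [show k + 1 / 2 + 1 / 2 = k + 1 by ring, show 2 * (k + 1 / 2) = 2 * k + 1 by ring,
    show 1 - (2 * k + 1) = -(2 * k) by ring, hpow] at duplication
  rw [show (2 * k + 1) / 2 = k + 1 / 2 by ring,
    show 2 * k + 2 - (2 * k / 2 + 1) = k + 1 by ring, Gamma_two_mul_add_two hk] at h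
  rw [eq_div_iff (by positivity), ← mul_right_inj' hΓ]
  have hcancel : 4 / (2 : ℝ) ^ (2 * k + 2) * 2 ^ (2 * k + 2) = 4 := by field_simp
  linear_combination 2 ^ (2 * k + 2) * h + √Real.pi / 2 * 2 ^ (2 * k + 2) * duplication
    + √Real.pi ^ 2 * Real.Gamma (2 * k + 1) / 2 * hcancel
    + 2 * Real.Gamma (2 * k + 1) * Real.sq_sqrt Real.pi_pos.le

end Bubble

section WeightedSobolev

variable {k : ℝ} {f : ℝ × ℝ → ℝ}

theorem sq_add_sq_mul_bubble_mul (k : ℝ) (z : ℝ × ℝ) :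
    (z.1 ^ 2 + z.2 ^ 2) * bubble (2 * k + 2) z * z.2 ^ (2 * k)
      = bubble (2 * k + 1) z * z.2 ^ (2 * k)
        - bubble (2 * k + 2) z * z.2 ^ (2 * k) := by
  have hρ : 0 < 1 + z.1 ^ 2 + z.2 ^ 2 := by positivity
  rw [bubble, bubble, show -(2 * k + 1) = 1 + -(2 * k + 2) by ring, Real.rpow_add hρ, Real.rpow_one]
  ring

theorem bubble_mul_massRatio_rpow_le (hk : 0 < k) (hf : ContDiff ℝ 1 f)
    (hf_supp : HasCompactSupport f) (hf_H : tsupport f ⊆ halfPlane) {B : ℝ}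
    (hB : B = ∫ z in halfPlane, bubble (2 * k + 2) z * z.2 ^ (2 * k)) :
    4 * (k * (k + 1)) * B
        * ((∫ z in halfPlane, |f z| ^ (2 + 2 / k) * z.2 ^ (2 * k)) / B) ^ (k / (k + 1)) ≤
      ∫ z in halfPlane, gradSq f z * z.2 ^ (2 * k) := by
  have hM := integrableOn_halfPlane_bubble_mul_rpow (w := 2 * k) (q := 2 * k + 2)
    (by linarith) (by linarith)
  have hS := integrableOn_halfPlane_bubble_mul_rpow (w := 2 * k) (q := 2 * k + 1)
    (by linarith) (by linarith)
  have hZ : ∫ z in halfPlane,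
      (z.1 ^ 2 + z.2 ^ 2) * bubble (2 * k + 2) z * z.2 ^ (2 * k)
        = (1 + 1 / k) * B := by
    simp only [sq_add_sq_mul_bubble_mul]
    rw [integral_sub hS hM, integral_halfPlane_bubble_two_mul_add_one hk, ← hB]
    ring
  have hpow (z : ℝ × ℝ) : (bubble (2 * k + 2) z) ^ ((2 * k + 1) / (2 * k + 2))
      = bubble (2 * k + 1) z := by
    rw [← Real.rpow_mul (by positivity), neg_mul, mul_div_cancel₀ _ (by positivity)]
  have key := massRatio_rpow_mul_entropy_sq_le_halfPlane hk hf hf_supp hf_H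
    (G := bubble (2 * k + 2))
    (Continuous.rpow_const (by fun_prop) fun z ↦ Or.inl (by positivity))
    (fun z ↦ by positivity) hM (by simpa only [hpow] using hS)
    (by simp only [sq_add_sq_mul_bubble_mul]; exact hS.sub hM)
  simp only [hpow] at key
  rw [hZ, integral_halfPlane_bubble_two_mul_add_one hk, ← hB] at key
  have hB₀ : 0 < B := by
    rw [hB, integral_halfPlane_bubble_two_mul_add_two hk]
    positivity
  refine le_of_mul_le_mul_left ?_ (by positivity : 0 < (2 + 1 / k) ^ 2 * (1 + 1 / k) * B)
  refine le_trans (le_of_eq ?_) (key.trans_eq (by ring))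
  field_simp
  ring

theorem mul_one_div_four_mul_rpow (hk : 0 < k) {B : ℝ} (hB : 0 < B) :
    B * (1 / (4 * B)) ^ (1 + 1 / k) = (1 / (2 ^ (2 * k + 2) * B)) ^ (1 / k) := by
  have hpow : (2 : ℝ) ^ (2 * k + 2) = 4 * 4 ^ k := by
    rw [show 2 * k + 2 = 2 * (1 + k) by ring, Real.rpow_mul two_pos.le,
      Real.rpow_one_add' (by norm_num) (by positivity)]
    norm_num
  rw [Real.rpow_one_add' (by positivity) (by positivity), hpow,
    show 1 / (4 * 4 ^ k * B) = (4 ^ k)⁻¹ * (1 / (4 * B)) by field_simp,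
    Real.mul_rpow (by positivity) (by positivity), Real.inv_rpow (by positivity),
    ← Real.rpow_mul (by positivity), mul_one_div_cancel hk.ne', Real.rpow_one]
  field_simp

theorem integral_abs_rpow_mul_rpow_le (hk : 0 < k) (hf : ContDiff ℝ 1 f)
    (hf_supp : HasCompactSupport f) (hf_H : tsupport f ⊆ halfPlane) :
    ∫ z in halfPlane, |f z| ^ (2 + 2 / k) * z.2 ^ (2 * k) ≤
      (1 / (k * (k + 1))) ^ (1 + 1 / k) * ((2 * k + 1) / (2 * Real.pi)) ^ (1 / k)
        * (∫ z in halfPlane, gradSq f z * z.2 ^ (2 * k)) ^ (1 + 1 / k) := by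
  have key := bubble_mul_massRatio_rpow_le hk hf hf_supp hf_H
    (integral_halfPlane_bubble_two_mul_add_two hk).symm
  set B := 2 * Real.pi / (2 ^ (2 * k + 2) * (2 * k + 1)) with hB
  have hB₀ : 0 < B := by positivity
  set m := ∫ z in halfPlane, |f z| ^ (2 + 2 / k) * z.2 ^ (2 * k)
  set E := ∫ z in halfPlane, gradSq f z * z.2 ^ (2 * k)
  have hm : 0 ≤ m := setIntegral_mul_rpow_nonneg isOpen_halfPlane.measurableSet
    (fun z _ ↦ Real.rpow_nonneg (abs_nonneg _) _) (fun _ hz ↦ le_of_lt hz) _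
  have hE : 0 ≤ E := le_trans (by positivity) key
  have hexp : k / (k + 1) * (1 + 1 / k) = 1 := by field_simp
  calc
    m = B * ((m / B) ^ (k / (k + 1))) ^ (1 + 1 / k) := by
      rw [← Real.rpow_mul (by positivity), hexp, Real.rpow_one, mul_div_cancel₀ _ hB₀.ne']
    _ ≤ B * (1 / (k * (k + 1)) * (1 / (4 * B)) * E) ^ (1 + 1 / k) := by
      gcongr
      rw [one_div_mul_one_div, one_div_mul_eq_div, le_div_iff₀ (by positivity)]
      linarith
    _ = (1 / (k * (k + 1))) ^ (1 + 1 / k) * (B * (1 / (4 * B)) ^ (1 + 1 / k))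
          * E ^ (1 + 1 / k) := by
      rw [Real.mul_rpow (by positivity) hE, Real.mul_rpow (by positivity) (by positivity)]
      ring
    _ = _ := by
      rw [mul_one_div_four_mul_rpow hk hB₀, hB]
      congr 3
      field_simp

end WeightedSobolev

theorem contDiff_mul_of_tsupport_subset {E : Type*} [NormedAddCommGroup E] [NormedSpace ℝ E]
    {n : WithTop ℕ∞} {φ g : E → ℝ} {U : Set E} (hU : IsOpen U) (hφ : ContDiffOn ℝ n φ U)
    (hg : ContDiff ℝ n g) (hgU : tsupport g ⊆ U) : ContDiff ℝ n fun z ↦ φ z * g z := by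
  refine contDiff_iff_contDiffAt.2 fun z ↦ ?_
  by_cases hz : z ∈ tsupport g
  · exact (hφ.contDiffAt (hU.mem_nhds (hgU hz))).mul hg.contDiffAt
  · refine contDiffAt_const.congr_of_eventuallyEq (f := fun _ ↦ 0) ?_
    filter_upwards [notMem_tsupport_iff_eventuallyEq.1 hz] with w hw
    rw [hw, Pi.zero_apply, mul_zero]

theorem integrable_fderiv_apply {h : ℝ × ℝ → ℝ} (hh : ContDiff ℝ 1 h)
    (hh_supp : HasCompactSupport h) (v : ℝ × ℝ) : Integrable fun z ↦ fderiv ℝ h z v :=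
  (continuous_fderiv_apply_of_contDiff hh v).integrable_of_hasCompactSupport
    (hh_supp.fderiv_apply ℝ v)

theorem integrable_gradSq {h : ℝ × ℝ → ℝ} (hh : ContDiff ℝ 1 h) (hh_supp : HasCompactSupport h) :
    Integrable (gradSq h) := by
  refine (continuous_gradSq hh).integrable_of_hasCompactSupport ?_
  refine (hh_supp.fderiv ℝ).mono' fun z hz ↦ subset_tsupport _ fun h₀ ↦ hz ?_
  simp [gradSq, h₀]

theorem integral_fderiv_apply_eq_zero {h : ℝ × ℝ → ℝ} (hh : ContDiff ℝ 1 h)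
    (hh_supp : HasCompactSupport h) (v : ℝ × ℝ) : ∫ z, fderiv ℝ h z v = 0 := by
  simpa using integral_mul_fderiv_eq_neg_fderiv_mul_of_integrable (μ := volume)
    (f := fun _ : ℝ × ℝ ↦ (1 : ℝ)) (g := h) (v := v) (by simp)
    (by simpa using integrable_fderiv_apply hh hh_supp v)
    (by simpa using hh.continuous.integrable_of_hasCompactSupport hh_supp) (by simp)
    fun z _ ↦ hh.differentiable one_ne_zero z

theorem setIntegral_fderiv_apply_eq_zero {h : ℝ × ℝ → ℝ} {s : Set (ℝ × ℝ)} (hh : ContDiff ℝ 1 h)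
    (hh_supp : HasCompactSupport h) (hs : tsupport h ⊆ s) {v : ℝ × ℝ} :
    ∫ z in s, fderiv ℝ h z v = 0 := by
  rw [setIntegral_eq_integral_of_forall_compl_eq_zero fun z hz ↦ ?_,
    integral_fderiv_apply_eq_zero hh hh_supp]
  rw [image_eq_zero_of_notMem_tsupport fun hzs ↦ hz (hs (tsupport_fderiv_subset ℝ hzs)),
    zero_apply]

theorem integral_muUpper (Ψ : ℝ × ℝ → ℝ) :
    ∫ z, Ψ z ∂muUpper = ∫ z in halfPlane, (z.2 ^ 2)⁻¹ * Ψ z := by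
  rw [muUpper, integral_withDensity_eq_integral_toReal_smul (by fun_prop)
    (.of_forall fun _ ↦ ENNReal.ofReal_lt_top)]
  simp only [ENNReal.toReal_ofReal (inv_nonneg.2 (sq_nonneg (_ : ℝ))), smul_eq_mul]

section Conformal

variable {k : ℝ} {g : ℝ × ℝ → ℝ}

theorem contDiff_snd_rpow_mul (s : ℝ) (hg : ContDiff ℝ 1 g) (hg_H : tsupport g ⊆ halfPlane) :
    ContDiff ℝ 1 fun z ↦ z.2 ^ s * g z :=
  contDiff_mul_of_tsupport_subset isOpen_halfPlane
    (fun _ hz ↦ (contDiffAt_snd.rpow_const_of_ne (ne_of_gt hz)).contDiffWithinAt) hg hg_H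

theorem integral_abs_snd_rpow_mul_rpow (hk : 0 < k) (g : ℝ × ℝ → ℝ) :
    ∫ z in halfPlane, |z.2 ^ (-k) * g z| ^ (2 + 2 / k) * z.2 ^ (2 * k)
      = ∫ z, |g z| ^ (2 + 2 / k) ∂muUpper := by
  rw [integral_muUpper]
  refine setIntegral_congr_fun isOpen_halfPlane.measurableSet fun z (hz : 0 < z.2) ↦ ?_
  have hpow : (z.2 ^ (-k)) ^ (2 + 2 / k) * z.2 ^ (2 * k) = (z.2 ^ 2)⁻¹ := by
    rw [← Real.rpow_mul hz.le, ← Real.rpow_add hz, ← Real.rpow_two, ← Real.rpow_neg hz.le]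
    congr 1
    field_simp
    ring
  rw [abs_mul, abs_of_pos (Real.rpow_pos_of_pos hz _),
    Real.mul_rpow (Real.rpow_nonneg hz.le _) (abs_nonneg _), ← hpow]
  ring

theorem fderiv_snd_rpow_mul_apply (s : ℝ) {h : ℝ × ℝ → ℝ} {z : ℝ × ℝ} (hz : 0 < z.2)
    (hh : DifferentiableAt ℝ h z) (v : ℝ × ℝ) :
    fderiv ℝ (fun z ↦ z.2 ^ s * h z) z v
      = z.2 ^ s * fderiv ℝ h z v + s * z.2 ^ (s - 1) * v.2 * h z := by
  have hpow : HasFDerivAt (fun z : ℝ × ℝ ↦ z.2 ^ s) _ z :=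
    hasFDerivAt_snd.rpow_const (Or.inl hz.ne')
  rw [(hpow.fun_mul hh.hasFDerivAt).fderiv]
  simp only [add_apply, smul_apply, smul_eq_mul, ContinuousLinearMap.coe_snd']
  ring

theorem gradSq_snd_rpow_mul (k : ℝ) (hg : ContDiff ℝ 1 g) {z : ℝ × ℝ} (hz : 0 < z.2) :
    gradSq (fun z ↦ z.2 ^ (-k) * g z) z * z.2 ^ (2 * k)
      = k * (k - 1) * ((z.2 ^ 2)⁻¹ * g z ^ 2) + gradSq g z
        - k * fderiv ℝ (fun z ↦ z.2 ^ (-1 : ℝ) * g z ^ 2) z (0, 1) := by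
  have hg_diff := hg.differentiable one_ne_zero z
  have hpow : z.2 ^ (2 * k) = (z.2 ^ (-k))⁻¹ ^ 2 := by
    rw [Real.rpow_neg hz.le, inv_inv, two_mul, Real.rpow_add hz, sq]
  have hpow₀ : z.2 ^ (-k) ≠ 0 := (Real.rpow_pos_of_pos hz _).ne'
  rw [gradSq, gradSq, fderiv_snd_rpow_mul_apply _ hz hg_diff,
    fderiv_snd_rpow_mul_apply _ hz hg_diff,
    fderiv_snd_rpow_mul_apply _ hz (hg_diff.fun_pow 2), fderiv_fun_pow 2 hg_diff, hpow,
    Real.rpow_sub_one hz.ne', Real.rpow_sub_one hz.ne', Real.rpow_neg_one]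
  simp only [mul_zero, zero_mul, add_zero, mul_one, Nat.add_one_sub_one, pow_one, nsmul_eq_mul,
    Nat.cast_ofNat, smul_apply, smul_eq_mul]
  field_simp
  ring

theorem integral_gradSq_snd_rpow_mul (k : ℝ) (hg : ContDiff ℝ 1 g) (hg_supp : HasCompactSupport g)
    (hg_H : tsupport g ⊆ halfPlane) :
    ∫ z in halfPlane, gradSq (fun z ↦ z.2 ^ (-k) * g z) z * z.2 ^ (2 * k)
      = k * (k - 1) * (∫ z, g z ^ 2 ∂muUpper) + ∫ z in halfPlane, gradSq g z := by
  have hsq_supp : HasCompactSupport fun z ↦ g z ^ 2 :=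
    hg_supp.comp_left (g := (· ^ 2)) (zero_pow two_ne_zero)
  have hsq_H : tsupport (fun z ↦ g z ^ 2) ⊆ halfPlane := by
    simpa only [sq] using tsupport_mul_subset_left.trans hg_H
  have hdiv : ContDiff ℝ 1 fun z ↦ z.2 ^ (-1 : ℝ) * g z ^ 2 :=
    contDiff_snd_rpow_mul _ (hg.pow 2) hsq_H
  have hdiv_supp : HasCompactSupport fun z ↦ z.2 ^ (-1 : ℝ) * g z ^ 2 := hsq_supp.mul_left
  have hmass_int : IntegrableOn (fun z ↦ k * (k - 1) * ((z.2 ^ 2)⁻¹ * g z ^ 2)) halfPlane :=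
    ((contDiff_mul_of_tsupport_subset isOpen_halfPlane
      (fun _ hz ↦
        ((contDiff_snd.pow 2).contDiffAt.inv (pow_ne_zero 2 (ne_of_gt hz))).contDiffWithinAt)
      (hg.pow 2) hsq_H).continuous.integrable_of_hasCompactSupport
        hsq_supp.mul_left).integrableOn.const_mul _
  have hgrad_int : IntegrableOn (gradSq g) halfPlane :=
    (integrable_gradSq hg hg_supp).integrableOn
  have hsum_int : IntegrableOn
      (fun z ↦ k * (k - 1) * ((z.2 ^ 2)⁻¹ * g z ^ 2) + gradSq g z) halfPlane :=
    hmass_int.add hgrad_int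
  have hdiv_int : IntegrableOn
      (fun z ↦ k * fderiv ℝ (fun z ↦ z.2 ^ (-1 : ℝ) * g z ^ 2) z (0, 1)) halfPlane :=
    (integrable_fderiv_apply hdiv hdiv_supp _).integrableOn.const_mul _
  rw [setIntegral_congr_fun isOpen_halfPlane.measurableSet
      fun z (hz : 0 < z.2) ↦ gradSq_snd_rpow_mul k hg hz,
    integral_sub hsum_int hdiv_int, integral_add hmass_int hgrad_int, integral_const_mul,
    integral_const_mul, setIntegral_fderiv_apply_eq_zero hdiv hdiv_supp
      (tsupport_mul_subset_right.trans hsq_H), integral_muUpper, mul_zero, sub_zero]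

theorem integral_abs_rpow_muUpper_le (hk : 0 < k) (hg : ContDiff ℝ 1 g)
    (hg_supp : HasCompactSupport g) (hg_H : tsupport g ⊆ halfPlane) :
    ∫ z, |g z| ^ (2 + 2 / k) ∂muUpper ≤
      (1 / (k * (k + 1))) ^ (1 + 1 / k) * ((2 * k + 1) / (2 * Real.pi)) ^ (1 / k)
        * (k * (k - 1) * (∫ z, g z ^ 2 ∂muUpper) + ∫ z in halfPlane, gradSq g z)
          ^ (1 + 1 / k) := by
  rw [← integral_abs_snd_rpow_mul_rpow hk, ← integral_gradSq_snd_rpow_mul k hg hg_supp hg_H]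
  exact integral_abs_rpow_mul_rpow_le hk (contDiff_snd_rpow_mul _ hg hg_H) hg_supp.mul_left
    (tsupport_mul_subset_right.trans hg_H)

end Conformal

theorem sobolev_family_hyperbolic_general {k : ℝ} (hk : 1 < k) {g : ℝ × ℝ → ℝ}
    (hg : ContDiff ℝ 1 g) (hg_supp : HasCompactSupport g)
    (hg_H : tsupport g ⊆ {q : ℝ × ℝ | 0 < q.2}) :
    ∫ z, |g z| ^ (2 + 2 / k) ∂muUpper
      ≤ ((k - 1) / (k + 1)) ^ (1 + 1 / k)
          * ((2 * k + 1) / (2 * Real.pi)) ^ (1 / k)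
          * ((∫ z, g z ^ 2 ∂muUpper) + 1 / (k * (k - 1)) *
              ∫ z in {q : ℝ × ℝ | 0 < q.2}, fderiv ℝ g z (1, 0) ^ 2 + fderiv ℝ g z (0, 1) ^ 2)
            ^ (1 + 1 / k) := by
  have hk₀ : 0 < k := one_pos.trans hk
  have hk₁ : 0 < k - 1 := sub_pos.2 hk
  refine (integral_abs_rpow_muUpper_le hk₀ hg hg_supp hg_H).trans_eq ?_
  set M := ∫ z, g z ^ 2 ∂muUpper
  set D := ∫ z in halfPlane, gradSq g z
  have hD₀ : 0 ≤ D := integral_nonneg fun z ↦ gradSq_nonneg g z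
  change _ = _ * _ * (M + 1 / (k * (k - 1)) * D) ^ (1 + 1 / k)
  rw [mul_right_comm, mul_right_comm (((k - 1) / (k + 1)) ^ (1 + 1 / k)), ← Real.mul_rpow,
    ← Real.mul_rpow]
  · congr 2
    field_simp
  all_goals positivity

/-- A one-parameter family of Sobolev inequalities on the hyperbolic plane
(inequality (3.13)): for an integer `n ≥ 5`, `k̃ = (n−2)/2`, `p = 2 + 2/k̃ = 2n/(n−2)`,
and a smooth compactly supported nonnegative `g` on the upper half-plane,
`∫ g^p dμ ≤ ((k̃−1)/(k̃+1))^{1+1/k̃}·((2k̃+1)/(2π))^{1/k̃}`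
`    ·[∫ g² dμ + (1/(k̃(k̃−1)))·∫ (|∂ₜg|² + |∂_y g|²) dt dy]^{1+1/k̃}`. -/
theorem sobolev_family_hyperbolic
    (n : ℕ) (hn : 5 ≤ n) (kt p : ℝ) (hkt : kt = ((n : ℝ) - 2) / 2)
    (hp : p = 2 + 2 / kt)
    (g : ℝ × ℝ → ℝ)
    (hsmooth : ContDiff ℝ (⊤ : ℕ∞) g)
    (hsupp : HasCompactSupport g)
    (hsuppH : tsupport g ⊆ {q : ℝ × ℝ | 0 < q.2})
    (hnn : ∀ z, 0 ≤ g z) :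
    ∫ z, (g z) ^ p ∂muUpper
      ≤ ((kt - 1) / (kt + 1)) ^ (1 + 1 / kt)
          * ((2 * kt + 1) / (2 * Real.pi)) ^ (1 / kt)
          * ((∫ z, (g z) ^ 2 ∂muUpper) + 1 / (kt * (kt - 1)) *
              ∫ z in {q : ℝ × ℝ | 0 < q.2},
                (fderiv ℝ g z (1, 0)) ^ 2 + (fderiv ℝ g z (0, 1)) ^ 2)
            ^ (1 + 1 / kt) := by
  subst hkt hp
  have hn' : (5 : ℝ) ≤ n := by exact_mod_cast hn
  simpa only [abs_of_nonneg (hnn _)] using sobolev_family_hyperbolic_general (by linarith)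
    (hsmooth.of_le (by exact_mod_cast le_top)) hsupp hsuppH
end

section
/- Uniqueness of the positive decaying (ground state) solution: Fix real numbers m > 2, ã > 0 and b̃ ≥ m, and set f(s) = ã·s^{1+2/m} − b̃·s. Then there is at most one α > 0 such that the solution u of u''(τ) + coth(τ)·u'(τ) + f(u(τ)) = 0 on (0,∞) with u(0) = α and lim_{τ→0+} u'(τ) = 0 satisfies u(τ) > 0 for all τ > 0 and lim_{τ→∞} u(τ) = 0. Equivalently, the semi-linear Poisson equation Δu + f(u) = 0 on the hyperbolic plane has at most one radial positive solution decaying to zero at infinity. -/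
open Set Filter

/-!
Put `v = sinh ^ β * u` with `β = 2 / (p + 3)`, where `p` is the exponent of the nonlinearity, and
let `σ` be the time with `dσ = sinh ^ (2 * β - 1) dt`. The equation becomes
`v_σσ + G v + a v ^ p = 0` with `G` strictly decreasing in time, so the energy
`v_σ ^ 2 / 2 + a v ^ (p + 1) / (p + 1) + G v ^ 2 / 2` of a ground state decreases; it tends to `0`
at infinity and hence is positive.

If `u₁ 0 < u₂ 0`, the Wronskian of `v₁` and `v₂` starts out negative, because `s ↦ a * s ^ p / s`
increases. Consider the energy of `v₁` weighted by `(v₂ / v₁) ^ 2`, minus the energy of `v₂`. It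
starts from `0` and decreases as long as the Wronskian is negative, which rules out a first zero of
the Wronskian: there `v₂ < v₁` would make it positive. So it decreases forever, whereas it also
tends to `0` at infinity.
-/

open Topology Asymptotics Real

section RealFunctions

variable {f : ℝ → ℝ} {a l T : ℝ}

theorem lt_of_strictAntiOn_Ioc_of_tendsto (hT : a < T) (hf : StrictAntiOn f (Ioc a T))
    (hlim : Tendsto f (𝓝[>] a) (𝓝 l)) : f T < l := by
  obtain ⟨c, hac, hcT⟩ := exists_between hT
  have h_le : f c ≤ l := by
    refine ge_of_tendsto hlim ?_
    filter_upwards [Ioo_mem_nhdsGT hac] with t ht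
    exact (hf ⟨ht.1, (ht.2.trans hcT).le⟩ ⟨hac, hcT.le⟩ ht.2).le
  exact (hf ⟨hac, hcT.le⟩ ⟨hT, le_rfl⟩ hcT).trans_le h_le

theorem le_of_monotoneOn_Ici_of_tendsto (hf : MonotoneOn f (Ici a))
    (hlim : Tendsto f atTop (𝓝 l)) : f a ≤ l :=
  ge_of_tendsto hlim ((eventually_ge_atTop a).mono fun _ ht ↦ hf self_mem_Ici ht ht)

theorem lt_of_strictAntiOn_Ici_of_tendsto (hf : StrictAntiOn f (Ici a))
    (hlim : Tendsto f atTop (𝓝 l)) : l < f a := by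
  have h_le : l ≤ f (a + 1) := by
    refine le_of_tendsto hlim ((eventually_ge_atTop (a + 1)).mono fun t ht ↦ ?_)
    exact hf.antitoneOn (by simp) (by grind) ht
  exact h_le.trans_lt (hf self_mem_Ici (by simp) (lt_add_one a))

theorem exists_first_zero_of_eventually_neg (hf : ContinuousOn f (Ioi a))
    (hneg : ∀ᶠ t in 𝓝[>] a, f t < 0) {c : ℝ} (hac : a < c) (hfc : 0 ≤ f c) :
    ∃ T, a < T ∧ f T = 0 ∧ ∀ t ∈ Ioo a T, f t < 0 := by
  obtain ⟨s, hs, h_sub⟩ := mem_nhdsGT_iff_exists_Ioo_subset.1 hneg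
  have hsc : s ≤ c := not_lt.1 fun hcs ↦ hfc.not_gt (h_sub ⟨hac, hcs⟩)
  have hf_Icc : ContinuousOn f (Icc s c) := hf.mono fun t ht ↦ lt_of_lt_of_le hs ht.1
  have h_compact : IsCompact (Icc s c ∩ f ⁻¹' Ici 0) :=
    isCompact_Icc.of_isClosed_subset
      (hf_Icc.preimage_isClosed_of_isClosed isClosed_Icc isClosed_Ici) inter_subset_left
  obtain ⟨T, ⟨hTsc, hT_nonneg⟩, hT_least⟩ := h_compact.exists_isLeast ⟨c, ⟨hsc, le_rfl⟩, hfc⟩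
  have haT : a < T := lt_of_lt_of_le hs hTsc.1
  have h_before : ∀ t ∈ Ioo a T, f t < 0 := fun t ht ↦ by
    by_contra! h_nonneg
    rcases lt_or_ge t s with hts | hst
    · exact h_nonneg.not_gt (h_sub ⟨ht.1, hts⟩)
    · exact ht.2.not_ge (hT_least ⟨⟨hst, ht.2.le.trans hTsc.2⟩, h_nonneg⟩)
  have hT_nonpos : f T ≤ 0 := by
    have h_left : Tendsto f (𝓝[<] T) (𝓝 (f T)) :=
      (hf.continuousAt (Ioi_mem_nhds haT)).tendsto.mono_left nhdsWithin_le_nhds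
    refine le_of_tendsto h_left ?_
    filter_upwards [Ioo_mem_nhdsLT haT] with t ht using (h_before t ht).le
  exact ⟨T, haT, hT_nonpos.antisymm hT_nonneg, h_before⟩

end RealFunctions

section Power

theorem hasDerivAt_const_mul_rpow_add_one (c : ℝ) {r s : ℝ} (hr : r + 1 ≠ 0) (hs : 0 < s) :
    HasDerivAt (fun s ↦ c / (r + 1) * s ^ (r + 1)) (c * s ^ r) s := by
  refine ((hasDerivAt_rpow_const (Or.inl hs.ne')).const_mul _).congr_deriv ?_
  rw [add_sub_cancel_right]
  field

theorem strictMonoOn_const_mul_rpow_div_pow {c r : ℝ} {n : ℕ} (hc : 0 < c) (hr : n < r) :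
    StrictMonoOn (fun s ↦ c * s ^ r / s ^ n) (Ioi 0) := by
  have h_mono : StrictMonoOn (fun s : ℝ ↦ s ^ (r - n)) (Ioi 0) :=
    (strictMonoOn_rpow_Ici_of_exponent_pos (sub_pos.2 hr)).mono Ioi_subset_Ici_self
  refine ((strictMono_mul_left_of_pos hc).comp_strictMonoOn h_mono).congr fun s hs ↦ ?_
  simp only [Function.comp_apply, rpow_sub_natCast (ne_of_gt hs), mul_div_assoc]

end Power

/-- `(v, w)` is an orbit, with `v > 0`, of the Hamiltonian system `v' = q w`,
`w' = -q (h(v) + G v)` on `(0, ∞)`. In the time `σ` with `dσ = q dt` this is the Emden–Fowler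
equation `v_σσ + G v + h(v) = 0`. -/
structure IsPositiveOrbit (q G h v w : ℝ → ℝ) : Prop where
  hasDerivAt_fst : ∀ t > 0, HasDerivAt v (q t * w t) t
  hasDerivAt_snd : ∀ t > 0, HasDerivAt w (-(q t * (h (v t) + G t * v t))) t
  pos : ∀ t > 0, 0 < v t

/-- The Hamiltonian along an orbit `(v, w)`, where `H` is a primitive of the nonlinearity. It is not
conserved because `G` depends on time. -/
noncomputable def orbitEnergy (H G v w : ℝ → ℝ) (t : ℝ) : ℝ :=
  w t ^ 2 / 2 + H (v t) + G t * v t ^ 2 / 2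

/-- The Wronskian of two orbits; its sign is that of the derivative of `v₂ / v₁`. -/
def orbitWronskian (v₁ w₁ v₂ w₂ : ℝ → ℝ) (t : ℝ) : ℝ :=
  v₁ t * w₂ t - v₂ t * w₁ t

/-- The difference of the energies of two orbits, the first one weighted by `(v₂ / v₁) ^ 2`. The
weight makes the derivative of `G` drop out of the derivative of the gap, whose sign is therefore
that of the Wronskian whenever the first energy is positive. -/
noncomputable def energyGap (H G v₁ w₁ v₂ w₂ : ℝ → ℝ) (t : ℝ) : ℝ :=
  orbitEnergy H G v₁ w₁ t * (v₂ t / v₁ t) ^ 2 - orbitEnergy H G v₂ w₂ t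

theorem energyGap_eq {H G v₁ w₁ v₂ w₂ : ℝ → ℝ} {t : ℝ} (hv₁ : v₁ t ≠ 0) (hv₂ : v₂ t ≠ 0) :
    energyGap H G v₁ w₁ v₂ w₂ t =
      v₂ t ^ 2 * (H (v₁ t) / v₁ t ^ 2 - H (v₂ t) / v₂ t ^ 2) -
        orbitWronskian v₁ w₁ v₂ w₂ t * (w₁ t * v₂ t + w₂ t * v₁ t) / (2 * v₁ t ^ 2) := by
  simp only [energyGap, orbitEnergy, orbitWronskian]
  field

namespace IsPositiveOrbit

section SingleOrbit

variable {q G h H v w : ℝ → ℝ}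

theorem hasDerivAt_orbitEnergy (horb : IsPositiveOrbit q G h v w)
    (hH : ∀ s > 0, HasDerivAt H (h s) s) {t : ℝ} (ht : 0 < t) (hG : DifferentiableAt ℝ G t) :
    HasDerivAt (orbitEnergy H G v w) (deriv G t * v t ^ 2 / 2) t := by
  have hv := horb.hasDerivAt_fst t ht
  have hw := horb.hasDerivAt_snd t ht
  refine ((((hw.fun_pow 2).div_const 2).add ((hH _ (horb.pos t ht)).comp t hv)).add
    ((hG.hasDerivAt.mul (hv.fun_pow 2)).div_const 2)).congr_deriv ?_
  push_cast
  ring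

theorem orbitEnergy_pos (horb : IsPositiveOrbit q G h v w)
    (hG : ∀ t > 0, DifferentiableAt ℝ G t) (hG' : ∀ t > 0, deriv G t < 0)
    (hH : ∀ s > 0, HasDerivAt H (h s) s)
    (hlim : Tendsto (orbitEnergy H G v w) atTop (𝓝 0)) {t : ℝ} (ht : 0 < t) :
    0 < orbitEnergy H G v w t := by
  have h_deriv : ∀ r ∈ Ici t, HasDerivAt (orbitEnergy H G v w) (deriv G r * v r ^ 2 / 2) r :=
    fun r hr ↦ horb.hasDerivAt_orbitEnergy hH (ht.trans_le hr) (hG r (ht.trans_le hr))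
  refine lt_of_strictAntiOn_Ici_of_tendsto (strictAntiOn_of_hasDerivWithinAt_neg (convex_Ici t)
    (HasDerivAt.continuousOn h_deriv)
    (fun r hr ↦ (h_deriv r (interior_subset hr)).hasDerivWithinAt) fun r hr ↦ ?_) hlim
  have hr : 0 < r := ht.trans_le (interior_subset hr)
  have hv := horb.pos r hr
  exact div_neg_of_neg_of_pos (mul_neg_of_neg_of_pos (hG' r hr) (by positivity)) two_pos

end SingleOrbit

section TwoOrbits

variable {q G h H v₁ w₁ v₂ w₂ : ℝ → ℝ}

theorem hasDerivAt_orbitWronskian (h₁ : IsPositiveOrbit q G h v₁ w₁)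
    (h₂ : IsPositiveOrbit q G h v₂ w₂) {t : ℝ} (ht : 0 < t) :
    HasDerivAt (orbitWronskian v₁ w₁ v₂ w₂)
      (q t * (v₁ t * v₂ t) * (h (v₁ t) / v₁ t - h (v₂ t) / v₂ t)) t := by
  have hv₁ := (h₁.pos t ht).ne'
  have hv₂ := (h₂.pos t ht).ne'
  refine (((h₁.hasDerivAt_fst t ht).mul (h₂.hasDerivAt_snd t ht)).sub
    ((h₂.hasDerivAt_fst t ht).mul (h₁.hasDerivAt_snd t ht))).congr_deriv ?_
  field

theorem orbitWronskian_neg_of_lt (h₁ : IsPositiveOrbit q G h v₁ w₁)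
    (h₂ : IsPositiveOrbit q G h v₂ w₂) (hq : ∀ t > 0, 0 < q t)
    (hh : StrictMonoOn (fun s ↦ h s / s) (Ioi 0))
    (hlim : Tendsto (orbitWronskian v₁ w₁ v₂ w₂) (𝓝[>] 0) (𝓝 0)) {T : ℝ} (hT : 0 < T)
    (hlt : ∀ t ∈ Ioo 0 T, v₁ t < v₂ t) : orbitWronskian v₁ w₁ v₂ w₂ T < 0 := by
  refine lt_of_strictAntiOn_Ioc_of_tendsto hT (strictAntiOn_of_hasDerivWithinAt_neg (convex_Ioc 0 T)
    (HasDerivAt.continuousOn fun t ht ↦ hasDerivAt_orbitWronskian h₁ h₂ ht.1)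
    (fun t ht ↦ (hasDerivAt_orbitWronskian h₁ h₂
      (interior_subset ht).1).hasDerivWithinAt) fun t ht ↦ ?_) hlim
  rw [interior_Ioc] at ht
  have hv₁ := h₁.pos t ht.1
  have hv₂ := h₂.pos t ht.1
  have hqt := hq t ht.1
  exact mul_neg_of_pos_of_neg (by positivity) (sub_neg.2 (hh hv₁ hv₂ (hlt t ht)))

theorem hasDerivAt_ratio (h₁ : IsPositiveOrbit q G h v₁ w₁)
    (h₂ : IsPositiveOrbit q G h v₂ w₂) {t : ℝ} (ht : 0 < t) :
    HasDerivAt (fun t ↦ v₂ t / v₁ t)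
      (q t * orbitWronskian v₁ w₁ v₂ w₂ t / v₁ t ^ 2) t := by
  refine ((h₂.hasDerivAt_fst t ht).div (h₁.hasDerivAt_fst t ht)
    (h₁.pos t ht).ne').congr_deriv ?_
  rw [orbitWronskian]
  ring

theorem strictAntiOn_ratio (h₁ : IsPositiveOrbit q G h v₁ w₁)
    (h₂ : IsPositiveOrbit q G h v₂ w₂) (hq : ∀ t > 0, 0 < q t) {D : Set ℝ} (hD : Convex ℝ D)
    (hD₀ : D ⊆ Ioi 0) (hW : ∀ t ∈ interior D, orbitWronskian v₁ w₁ v₂ w₂ t < 0) :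
    StrictAntiOn (fun t ↦ v₂ t / v₁ t) D := by
  refine strictAntiOn_of_hasDerivWithinAt_neg hD
    (HasDerivAt.continuousOn fun t ht ↦ hasDerivAt_ratio h₁ h₂ (hD₀ ht))
    (fun t ht ↦ (hasDerivAt_ratio h₁ h₂ (hD₀ (interior_subset ht))).hasDerivWithinAt)
    fun t ht ↦ ?_
  have ht₀ : 0 < t := hD₀ (interior_subset ht)
  exact div_neg_of_neg_of_pos (mul_neg_of_pos_of_neg (hq t ht₀) (hW t ht))
    (pow_pos (h₁.pos t ht₀) 2)

theorem hasDerivAt_energyGap (h₁ : IsPositiveOrbit q G h v₁ w₁)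
    (h₂ : IsPositiveOrbit q G h v₂ w₂) (hH : ∀ s > 0, HasDerivAt H (h s) s) {t : ℝ} (ht : 0 < t)
    (hG : DifferentiableAt ℝ G t) :
    HasDerivAt (energyGap H G v₁ w₁ v₂ w₂)
      (2 * orbitEnergy H G v₁ w₁ t * (v₂ t / v₁ t) *
        (q t * orbitWronskian v₁ w₁ v₂ w₂ t / v₁ t ^ 2)) t := by
  have hv₁ := (h₁.pos t ht).ne'
  refine (((h₁.hasDerivAt_orbitEnergy hH ht hG).mul ((hasDerivAt_ratio h₁ h₂ ht).fun_pow 2)).sub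
    (h₂.hasDerivAt_orbitEnergy hH ht hG)).congr_deriv ?_
  push_cast
  field

theorem strictAntiOn_energyGap (h₁ : IsPositiveOrbit q G h v₁ w₁)
    (h₂ : IsPositiveOrbit q G h v₂ w₂) (hq : ∀ t > 0, 0 < q t)
    (hG : ∀ t > 0, DifferentiableAt ℝ G t) (hH : ∀ s > 0, HasDerivAt H (h s) s)
    (hE₁ : ∀ t > 0, 0 < orbitEnergy H G v₁ w₁ t) {D : Set ℝ} (hD : Convex ℝ D)
    (hD₀ : D ⊆ Ioi 0) (hW : ∀ t ∈ interior D, orbitWronskian v₁ w₁ v₂ w₂ t < 0) :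
    StrictAntiOn (energyGap H G v₁ w₁ v₂ w₂) D := by
  have h_deriv : ∀ t ∈ D, HasDerivAt (energyGap H G v₁ w₁ v₂ w₂) _ t :=
    fun t ht ↦ hasDerivAt_energyGap h₁ h₂ hH (hD₀ ht) (hG t (hD₀ ht))
  refine strictAntiOn_of_hasDerivWithinAt_neg hD (HasDerivAt.continuousOn h_deriv)
    (fun t ht ↦ (h_deriv t (interior_subset ht)).hasDerivWithinAt) fun t ht ↦ ?_
  have ht₀ : 0 < t := hD₀ (interior_subset ht)
  have hv₁ := h₁.pos t ht₀
  have hv₂ := h₂.pos t ht₀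
  have hE := hE₁ t ht₀
  exact mul_neg_of_pos_of_neg (by positivity)
    (div_neg_of_neg_of_pos (mul_neg_of_pos_of_neg (hq t ht₀) (hW t ht)) (by positivity))

/-- At a first zero `T` of the Wronskian the ratio `v₂ / v₁` has decreased below `1`, so the energy
gap is positive there, although it decreases from `0` on `(0, T)`. -/
theorem orbitWronskian_neg (h₁ : IsPositiveOrbit q G h v₁ w₁)
    (h₂ : IsPositiveOrbit q G h v₂ w₂) (hq : ∀ t > 0, 0 < q t)
    (hG : ∀ t > 0, DifferentiableAt ℝ G t) (hH : ∀ s > 0, HasDerivAt H (h s) s)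
    (hh : StrictMonoOn (fun s ↦ h s / s) (Ioi 0))
    (hHs : StrictMonoOn (fun s ↦ H s / s ^ 2) (Ioi 0))
    (hE₁ : ∀ t > 0, 0 < orbitEnergy H G v₁ w₁ t)
    (hW₀ : Tendsto (orbitWronskian v₁ w₁ v₂ w₂) (𝓝[>] 0) (𝓝 0))
    (hgap₀ : Tendsto (energyGap H G v₁ w₁ v₂ w₂) (𝓝[>] 0) (𝓝 0))
    (hlt : ∀ᶠ t in 𝓝[>] 0, v₁ t < v₂ t) {t : ℝ} (ht : 0 < t) :
    orbitWronskian v₁ w₁ v₂ w₂ t < 0 := by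
  by_contra! hWt
  have hW_near : ∀ᶠ t in 𝓝[>] 0, orbitWronskian v₁ w₁ v₂ w₂ t < 0 := by
    obtain ⟨δ, hδ, hδ_lt⟩ := mem_nhdsGT_iff_exists_Ioo_subset.1 hlt
    filter_upwards [Ioo_mem_nhdsGT hδ] with r hr
    exact orbitWronskian_neg_of_lt h₁ h₂ hq hh hW₀ hr.1
      fun s hs ↦ hδ_lt ⟨hs.1, hs.2.trans hr.2⟩
  obtain ⟨T, hT, hWT, hW_neg⟩ := exists_first_zero_of_eventually_neg
    (HasDerivAt.continuousOn fun _ hr ↦ hasDerivAt_orbitWronskian h₁ h₂ hr) hW_near ht hWt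
  rw [← interior_Ioc] at hW_neg
  have hv₁ := h₁.pos T hT
  have hv₂ := h₂.pos T hT
  have h_crossed : v₂ T < v₁ T := by
    by_contra! h_le
    refine (orbitWronskian_neg_of_lt h₁ h₂ hq hh hW₀ hT fun r hr ↦ ?_).ne hWT
    have h_ratio : v₂ T / v₁ T < v₂ r / v₁ r :=
      strictAntiOn_ratio h₁ h₂ hq (convex_Ioc 0 T) Ioc_subset_Ioi_self hW_neg
        ⟨hr.1, hr.2.le⟩ ⟨hT, le_rfl⟩ hr.2
    exact (one_lt_div (h₁.pos r hr.1)).1 (((one_le_div hv₁).2 h_le).trans_lt h_ratio)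
  have h_gap_pos : 0 < energyGap H G v₁ w₁ v₂ w₂ T := by
    rw [energyGap_eq hv₁.ne' hv₂.ne', hWT, zero_mul, zero_div, sub_zero]
    exact mul_pos (by positivity) (sub_pos.2 (hHs hv₂ hv₁ h_crossed))
  exact h_gap_pos.not_gt <| lt_of_strictAntiOn_Ioc_of_tendsto hT
    (strictAntiOn_energyGap h₁ h₂ hq hG hH hE₁ (convex_Ioc 0 T) Ioc_subset_Ioi_self hW_neg) hgap₀

theorem tendsto_energyGap_atTop (h₁ : IsPositiveOrbit q G h v₁ w₁)
    (h₂ : IsPositiveOrbit q G h v₂ w₂) (hq : ∀ t > 0, 0 < q t)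
    (hW : ∀ t > 0, orbitWronskian v₁ w₁ v₂ w₂ t < 0)
    (hE₁ : Tendsto (orbitEnergy H G v₁ w₁) atTop (𝓝 0))
    (hE₂ : Tendsto (orbitEnergy H G v₂ w₂) atTop (𝓝 0)) :
    Tendsto (energyGap H G v₁ w₁ v₂ w₂) atTop (𝓝 0) := by
  have h_ratio : (fun t ↦ v₂ t / v₁ t) =O[atTop] fun _ ↦ (1 : ℝ) := by
    refine IsBigO.of_bound (v₂ 1 / v₁ 1) ?_
    filter_upwards [eventually_ge_atTop 1] with t ht
    have ht₀ : 0 < t := one_pos.trans_le ht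
    rw [norm_of_nonneg (div_pos (h₂.pos t ht₀) (h₁.pos t ht₀)).le, norm_one, mul_one]
    exact (strictAntiOn_ratio h₁ h₂ hq (convex_Ioi 0) subset_rfl
      fun r hr ↦ hW r (interior_subset hr)).antitoneOn (mem_Ioi.2 one_pos) ht₀ ht
  have h_weighted := ((isLittleO_one_iff ℝ).2 hE₁).mul_isBigO (h_ratio.pow 2)
  simp only [one_pow, mul_one] at h_weighted
  simpa only [sub_zero] using! ((isLittleO_one_iff ℝ).1 h_weighted).sub hE₂

theorem not_eventually_lt (h₁ : IsPositiveOrbit q G h v₁ w₁)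
    (h₂ : IsPositiveOrbit q G h v₂ w₂) (hq : ∀ t > 0, 0 < q t)
    (hG : ∀ t > 0, DifferentiableAt ℝ G t) (hG' : ∀ t > 0, deriv G t < 0)
    (hH : ∀ s > 0, HasDerivAt H (h s) s) (hh : StrictMonoOn (fun s ↦ h s / s) (Ioi 0))
    (hHs : StrictMonoOn (fun s ↦ H s / s ^ 2) (Ioi 0))
    (hW₀ : Tendsto (orbitWronskian v₁ w₁ v₂ w₂) (𝓝[>] 0) (𝓝 0))
    (hgap₀ : Tendsto (energyGap H G v₁ w₁ v₂ w₂) (𝓝[>] 0) (𝓝 0))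
    (hE₁ : Tendsto (orbitEnergy H G v₁ w₁) atTop (𝓝 0))
    (hE₂ : Tendsto (orbitEnergy H G v₂ w₂) atTop (𝓝 0)) :
    ¬ ∀ᶠ t in 𝓝[>] 0, v₁ t < v₂ t := by
  intro hlt
  have hE₁_pos : ∀ t > 0, 0 < orbitEnergy H G v₁ w₁ t :=
    fun t ht ↦ h₁.orbitEnergy_pos hG hG' hH hE₁ ht
  have hW : ∀ t > 0, orbitWronskian v₁ w₁ v₂ w₂ t < 0 :=
    fun t ht ↦ orbitWronskian_neg h₁ h₂ hq hG hH hh hHs hE₁_pos hW₀ hgap₀ hlt ht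
  have h_anti : StrictAntiOn (energyGap H G v₁ w₁ v₂ w₂) (Ioi 0) :=
    strictAntiOn_energyGap h₁ h₂ hq hG hH hE₁_pos (convex_Ioi 0) subset_rfl
      fun t ht ↦ hW t (interior_subset ht)
  have h_gap_neg : energyGap H G v₁ w₁ v₂ w₂ 1 < 0 :=
    lt_of_strictAntiOn_Ioc_of_tendsto one_pos (h_anti.mono Ioc_subset_Ioi_self) hgap₀
  have h_gap_pos : 0 < energyGap H G v₁ w₁ v₂ w₂ 1 :=
    lt_of_strictAntiOn_Ici_of_tendsto (h_anti.mono (Ici_subset_Ioi.2 one_pos))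
      (tendsto_energyGap_atTop h₁ h₂ hq hW hE₁ hE₂)
  exact h_gap_neg.not_gt h_gap_pos

end TwoOrbits

end IsPositiveOrbit

theorem tendsto_sinh_atTop : Tendsto sinh atTop atTop :=
  tendsto_atTop_mono' atTop ((eventually_ge_atTop 0).mono fun _ ↦ self_le_sinh_iff.2) tendsto_id

theorem tendsto_sinh_nhdsGT_zero : Tendsto sinh (𝓝[>] 0) (𝓝 0) := by
  simpa using continuous_sinh.continuousWithinAt (s := Ioi 0) (x := 0) |>.tendsto

theorem tendsto_inv_sinh_rpow_atTop {β : ℝ} (hβ : 0 < β) :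
    Tendsto (fun t ↦ (sinh t ^ β)⁻¹) atTop (𝓝 0) :=
  tendsto_inv_atTop_zero.comp ((tendsto_rpow_atTop hβ).comp tendsto_sinh_atTop)

theorem hasDerivAt_sinh_rpow (β : ℝ) {t : ℝ} (ht : 0 < t) :
    HasDerivAt (fun t ↦ sinh t ^ β) (β * cosh t * sinh t ^ β / sinh t) t := by
  have hs := (sinh_pos_iff.2 ht).ne'
  refine ((hasDerivAt_sinh t).rpow_const (p := β) (Or.inl hs)).congr_deriv ?_
  rw [rpow_sub_one hs]
  ring

/-- `u` is a positive radial solution of `Δu + a u ^ p - b u = 0` on the hyperbolic plane that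
decays at infinity, as a function of the distance to the origin. Derivatives are only constrained
on `(0, ∞)`, where the equation has no singularity. -/
structure IsGroundState (a b p : ℝ) (u : ℝ → ℝ) : Prop where
  continuousOn : ContinuousOn u (Ici 0)
  differentiableAt : ∀ t ∈ Ioi (0 : ℝ), DifferentiableAt ℝ u t
  differentiableAt_deriv : ∀ t ∈ Ioi (0 : ℝ), DifferentiableAt ℝ (deriv u) t
  ode : ∀ t ∈ Ioi (0 : ℝ),
    deriv (deriv u) t + cosh t / sinh t * deriv u t + (a * u t ^ p - b * u t) = 0
  tendsto_deriv_zero : Tendsto (deriv u) (𝓝[>] 0) (𝓝 0)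
  pos_zero : 0 < u 0
  pos : ∀ t ∈ Ioi (0 : ℝ), 0 < u t
  tendsto_atTop : Tendsto u atTop (𝓝 0)

namespace IsGroundState

variable {a b p : ℝ} {u : ℝ → ℝ}

theorem tendsto_zero (hu : IsGroundState a b p u) : Tendsto u (𝓝[>] 0) (𝓝 (u 0)) :=
  ((hu.continuousOn 0 self_mem_Ici).mono Ioi_subset_Ici_self).tendsto

theorem hasDerivAt (hu : IsGroundState a b p u) {t : ℝ} (ht : 0 < t) :
    HasDerivAt u (deriv u t) t :=
  (hu.differentiableAt t ht).hasDerivAt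

theorem hasDerivAt_sinh_mul_deriv (hu : IsGroundState a b p u) {t : ℝ} (ht : 0 < t) :
    HasDerivAt (fun t ↦ sinh t * deriv u t) (sinh t * (b * u t - a * u t ^ p)) t := by
  have hs := (sinh_pos_iff.2 ht).ne'
  refine ((hasDerivAt_sinh t).mul (hu.differentiableAt_deriv t ht).hasDerivAt).congr_deriv ?_
  rw [show deriv (deriv u) t = b * u t - a * u t ^ p - cosh t / sinh t * deriv u t by
    linarith [hu.ode t ht]]
  field

theorem eventually_mul_rpow_lt (hu : IsGroundState a b p u) (hp : 1 < p) (hb : 0 < b) :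
    ∀ᶠ t in atTop, a * u t ^ p < b * u t := by
  have h_lim : Tendsto (fun t ↦ a * u t ^ (p - 1)) atTop (𝓝 0) := by
    simpa [zero_rpow (sub_pos.2 hp).ne'] using
      (hu.tendsto_atTop.rpow_const (Or.inr (sub_pos.2 hp).le)).const_mul a
  filter_upwards [h_lim.eventually_lt_const hb, eventually_gt_atTop 0] with t h_lt ht
  have hut := hu.pos t ht
  calc a * u t ^ p = a * u t ^ (p - 1) * u t := by rw [rpow_sub_one hut.ne']; field
    _ < b * u t := by gcongr

theorem exists_strictMonoOn_sinh_mul_deriv (hu : IsGroundState a b p u) (hp : 1 < p)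
    (hb : 0 < b) : ∃ T > 0, StrictMonoOn (fun t ↦ sinh t * deriv u t) (Ici T) := by
  obtain ⟨T, hT⟩ :=
    eventually_atTop.1 ((hu.eventually_mul_rpow_lt hp hb).and (eventually_gt_atTop 0))
  have h_pos : ∀ t ∈ Ici T, 0 < t := fun t ht ↦ (hT t ht).2
  refine ⟨T, h_pos T self_mem_Ici, strictMonoOn_of_hasDerivWithinAt_pos (convex_Ici T)
    (HasDerivAt.continuousOn fun t ht ↦ hu.hasDerivAt_sinh_mul_deriv (h_pos t ht))
    (fun t ht ↦ (hu.hasDerivAt_sinh_mul_deriv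
      (h_pos t (interior_subset ht))).hasDerivWithinAt) fun t ht ↦ ?_⟩
  obtain ⟨h_lt, ht₀⟩ := hT t (interior_subset ht)
  exact mul_pos (sinh_pos_iff.2 ht₀) (sub_pos.2 h_lt)

theorem deriv_neg_of_strictMonoOn (hu : IsGroundState a b p u) {T : ℝ} (hT : 0 < T)
    (hmono : StrictMonoOn (fun t ↦ sinh t * deriv u t) (Ici T)) : deriv u T < 0 := by
  by_contra! h_nonneg
  have h_pos : ∀ t ∈ Ici T, 0 < t := fun t ht ↦ hT.trans_le ht
  have hu_mono : MonotoneOn u (Ici T) := by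
    refine monotoneOn_of_hasDerivWithinAt_nonneg (convex_Ici T)
      (hu.continuousOn.mono (Ici_subset_Ici.2 hT.le))
      (fun t ht ↦ (hu.hasDerivAt (h_pos t (interior_subset ht))).hasDerivWithinAt) fun t ht ↦ ?_
    have h_le := hmono.monotoneOn self_mem_Ici (interior_subset ht) (interior_subset ht)
    have hs := sinh_pos_iff.2 (h_pos t (interior_subset ht))
    exact nonneg_of_mul_nonneg_right
      ((mul_nonneg (sinh_pos_iff.2 hT).le h_nonneg).trans h_le) hs
  exact (hu.pos T hT).not_ge (le_of_monotoneOn_Ici_of_tendsto hu_mono hu.tendsto_atTop)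

theorem sinh_mul_deriv_isBigO_one (hu : IsGroundState a b p u) (hp : 1 < p) (hb : 0 < b) :
    (fun t ↦ sinh t * deriv u t) =O[atTop] fun _ ↦ (1 : ℝ) := by
  obtain ⟨T, hT, hmono⟩ := hu.exists_strictMonoOn_sinh_mul_deriv hp hb
  refine IsBigO.of_bound |sinh T * deriv u T| ?_
  filter_upwards [eventually_ge_atTop T] with t ht
  have h_neg : sinh t * deriv u t < 0 :=
    mul_neg_of_pos_of_neg (sinh_pos_iff.2 (hT.trans_le ht)) <|
      hu.deriv_neg_of_strictMonoOn (hT.trans_le ht) (hmono.mono (Ici_subset_Ici.2 ht))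
  rw [norm_one, mul_one, norm_eq_abs]
  exact abs_le_abs_of_nonpos h_neg.le (hmono.monotoneOn self_mem_Ici ht ht)

/-- Integrating `u' ≥ -C / sinh ≥ (C / sinh)'` from `t` to infinity gives `u ≤ C / sinh`. -/
theorem sinh_mul_le (hu : IsGroundState a b p u) {C T : ℝ} (hC : 0 ≤ C) (hT : 0 < T)
    (hbound : ∀ t ≥ T, -C ≤ sinh t * deriv u t) : sinh T * u T ≤ C := by
  have h_deriv : ∀ t ∈ Ici T, HasDerivAt (fun t ↦ u t - C * (sinh t)⁻¹)
      (deriv u t - C * (-cosh t / sinh t ^ 2)) t := fun t ht ↦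
    (hu.hasDerivAt (hT.trans_le ht)).sub
      (((hasDerivAt_sinh t).inv (sinh_pos_iff.2 (hT.trans_le ht)).ne').const_mul C)
  have h_mono : MonotoneOn (fun t ↦ u t - C * (sinh t)⁻¹) (Ici T) := by
    refine monotoneOn_of_hasDerivWithinAt_nonneg (convex_Ici T)
      (HasDerivAt.continuousOn h_deriv)
      (fun t ht ↦ (h_deriv t (interior_subset ht)).hasDerivWithinAt) fun t ht ↦ ?_
    have hs : 0 < sinh t := sinh_pos_iff.2 (hT.trans_le (interior_subset ht))
    have h_factor : deriv u t - C * (-cosh t / sinh t ^ 2) =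
        ((sinh t * deriv u t + C) * sinh t + C * (cosh t - sinh t)) / sinh t ^ 2 := by
      field
    rw [h_factor]
    have h_flux : 0 ≤ sinh t * deriv u t + C := by linarith [hbound t (interior_subset ht)]
    have h_cosh : 0 ≤ cosh t - sinh t := sub_nonneg.2 (sinh_lt_cosh t).le
    positivity
  have h_lim : Tendsto (fun t ↦ u t - C * (sinh t)⁻¹) atTop (𝓝 0) := by
    simpa using hu.tendsto_atTop.sub ((tendsto_inv_atTop_zero.comp tendsto_sinh_atTop).const_mul C)
  have h_le : u T - C * (sinh T)⁻¹ ≤ 0 :=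
    le_of_monotoneOn_Ici_of_tendsto (f := fun t ↦ u t - C * (sinh t)⁻¹) h_mono h_lim
  rwa [sub_nonpos, ← div_eq_mul_inv, le_div_iff₀' (sinh_pos_iff.2 hT)] at h_le

theorem sinh_mul_isBigO_one (hu : IsGroundState a b p u) (hp : 1 < p) (hb : 0 < b) :
    (fun t ↦ sinh t * u t) =O[atTop] fun _ ↦ (1 : ℝ) := by
  obtain ⟨C, hC, h_flux⟩ := (hu.sinh_mul_deriv_isBigO_one hp hb).exists_nonneg
  obtain ⟨T, hT⟩ := eventually_atTop.1 h_flux.bound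
  refine IsBigO.of_bound C ?_
  filter_upwards [eventually_ge_atTop T, eventually_gt_atTop 0] with t htT ht
  simp only [norm_one, mul_one, norm_eq_abs] at hT ⊢
  rw [abs_of_pos (mul_pos (sinh_pos_iff.2 ht) (hu.pos t ht))]
  exact hu.sinh_mul_le hC ht fun r hr ↦ neg_le_of_abs_le (hT r (htT.trans hr))

theorem cosh_mul_isBigO_one (hu : IsGroundState a b p u) (hp : 1 < p) (hb : 0 < b) :
    (fun t ↦ cosh t * u t) =O[atTop] fun _ ↦ (1 : ℝ) := by
  have h_exp : Tendsto (fun t ↦ exp (-t) * u t) atTop (𝓝 (0 * 0)) :=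
    (tendsto_exp_atBot.comp tendsto_neg_atTop_atBot).mul hu.tendsto_atTop
  refine ((hu.sinh_mul_isBigO_one hp hb).add (h_exp.isBigO_one ℝ)).congr_left fun t ↦ ?_
  rw [← cosh_sub_sinh]
  ring

end IsGroundState

/-- The position coordinate `sinh ^ β * u` of the Emden–Fowler transform. With `β = 2 / (p + 3)` the
nonlinearity acquires a constant coefficient in the time `σ` with `dσ = emdenFowlerWeight β dt`. -/
noncomputable def emdenFowlerPos (β : ℝ) (u : ℝ → ℝ) (t : ℝ) : ℝ :=
  sinh t ^ β * u t

/-- The momentum conjugate to `emdenFowlerPos`, namely its derivative in the time `σ`. -/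
noncomputable def emdenFowlerMom (β : ℝ) (u : ℝ → ℝ) (t : ℝ) : ℝ :=
  (sinh t * deriv u t + β * cosh t * u t) / sinh t ^ β

/-- The density `dσ / dt = sinh ^ (2 * β - 1)` of the Emden–Fowler time. -/
noncomputable def emdenFowlerWeight (β t : ℝ) : ℝ :=
  (sinh t ^ β) ^ 2 / sinh t

/-- The coefficient of the linear term in the Emden–Fowler form of the equation. -/
noncomputable def emdenFowlerPotential (b β t : ℝ) : ℝ :=
  (β ^ 2 - (β - β ^ 2 + b) * sinh t ^ 2) / (sinh t ^ β) ^ 4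

theorem orbitWronskian_emdenFowler {β t : ℝ} {u₁ u₂ : ℝ → ℝ} (ht : 0 < t) :
    orbitWronskian (emdenFowlerPos β u₁) (emdenFowlerMom β u₁) (emdenFowlerPos β u₂)
      (emdenFowlerMom β u₂) t = sinh t * (u₁ t * deriv u₂ t - u₂ t * deriv u₁ t) := by
  have hr := (rpow_pos_of_pos (sinh_pos_iff.2 ht) β).ne'
  simp only [orbitWronskian, emdenFowlerPos, emdenFowlerMom]
  field

section Potential

variable {b β t : ℝ}

theorem emdenFowlerWeight_pos (β : ℝ) (ht : 0 < t) : 0 < emdenFowlerWeight β t := by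
  have := sinh_pos_iff.2 ht
  unfold emdenFowlerWeight
  positivity

theorem hasDerivAt_emdenFowlerPotential (b β : ℝ) (ht : 0 < t) :
    HasDerivAt (emdenFowlerPotential b β)
      (-(cosh t * (4 * β ^ 3 + (2 - 4 * β) * (β - β ^ 2 + b) * sinh t ^ 2) /
        (sinh t * (sinh t ^ β) ^ 4))) t := by
  have hs := sinh_pos_iff.2 ht
  have := rpow_pos_of_pos hs β
  refine (((((hasDerivAt_sinh t).fun_pow 2).const_mul (β - β ^ 2 + b)).const_sub (β ^ 2)).div
    ((hasDerivAt_sinh_rpow β ht).fun_pow 4) (by positivity)).congr_deriv ?_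
  push_cast
  field

theorem deriv_emdenFowlerPotential_neg (hb : 0 < b) (hβ₀ : 0 < β) (hβ : β < 1 / 2) (ht : 0 < t) :
    deriv (emdenFowlerPotential b β) t < 0 := by
  have := sinh_pos_iff.2 ht
  have h_coeff : 0 < 2 - 4 * β := by linarith
  have h_const : 0 < β - β ^ 2 + b := by nlinarith
  rw [(hasDerivAt_emdenFowlerPotential b β ht).deriv, neg_lt_zero]
  positivity

end Potential

namespace IsGroundState

variable {a b p β : ℝ} {u u₁ u₂ : ℝ → ℝ}

theorem emdenFowlerPos_pos (hu : IsGroundState a b p u) {t : ℝ} (ht : 0 < t) :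
    0 < emdenFowlerPos β u t :=
  mul_pos (rpow_pos_of_pos (sinh_pos_iff.2 ht) β) (hu.pos t ht)

theorem isPositiveOrbit (hu : IsGroundState a b p u) (hβ : β * (p + 3) = 2) :
    IsPositiveOrbit (emdenFowlerWeight β) (emdenFowlerPotential b β) (fun s ↦ a * s ^ p)
      (emdenFowlerPos β u) (emdenFowlerMom β u) where
  hasDerivAt_fst t ht := by
    have hs := sinh_pos_iff.2 ht
    have := rpow_pos_of_pos hs β
    refine ((hasDerivAt_sinh_rpow β ht).mul (hu.hasDerivAt ht)).congr_deriv ?_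
    rw [emdenFowlerWeight, emdenFowlerMom]
    field
  hasDerivAt_snd t ht := by
    have hs := sinh_pos_iff.2 ht
    have hr := rpow_pos_of_pos hs β
    have h_rpow : (sinh t ^ β) ^ p = sinh t ^ 2 / (sinh t ^ β) ^ 3 := by
      rw [eq_div_iff (by positivity), ← rpow_mul hs.le, ← rpow_mul_natCast hs.le, ← rpow_add hs,
        ← rpow_natCast]
      congr 1
      push_cast
      linarith
    refine (((hu.hasDerivAt_sinh_mul_deriv ht).add
      (((hasDerivAt_cosh t).const_mul β).mul (hu.hasDerivAt ht))).div
        (hasDerivAt_sinh_rpow β ht) hr.ne').congr_deriv ?_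
    rw [emdenFowlerWeight, emdenFowlerPotential, emdenFowlerPos,
      mul_rpow hr.le (hu.pos t ht).le, h_rpow]
    simp only [Pi.add_apply, Pi.mul_apply]
    field_simp
    linear_combination -u t * β ^ 2 * cosh_sq t
  pos _ ht := hu.emdenFowlerPos_pos ht

theorem tendsto_emdenFowlerPos_atTop (hu : IsGroundState a b p u) (hp : 1 < p) (hb : 0 < b)
    (hβ : β < 1) : Tendsto (emdenFowlerPos β u) atTop (𝓝 0) := by
  have h_pow : Tendsto (fun t ↦ sinh t ^ (-(1 - β))) atTop (𝓝 0) :=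
    (tendsto_rpow_neg_atTop (sub_pos.2 hβ)).comp tendsto_sinh_atTop
  have h_mul := ((isLittleO_one_iff ℝ).2 h_pow).mul_isBigO (hu.sinh_mul_isBigO_one hp hb)
  simp only [mul_one] at h_mul
  refine ((isLittleO_one_iff ℝ).1 h_mul).congr' ?_
  filter_upwards [eventually_gt_atTop 0] with t ht
  have hs := (sinh_pos_iff.2 ht).ne'
  rw [neg_sub, rpow_sub_one hs, emdenFowlerPos]
  field

theorem tendsto_emdenFowlerMom_atTop (hu : IsGroundState a b p u) (hp : 1 < p) (hb : 0 < b)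
    (hβ : 0 < β) : Tendsto (emdenFowlerMom β u) atTop (𝓝 0) := by
  have h_num := (hu.sinh_mul_deriv_isBigO_one hp hb).add
    ((hu.cosh_mul_isBigO_one hp hb).const_mul_left β)
  have h_mul := h_num.mul_isLittleO ((isLittleO_one_iff ℝ).2 (tendsto_inv_sinh_rpow_atTop hβ))
  simp only [mul_one] at h_mul
  refine ((isLittleO_one_iff ℝ).1 h_mul).congr fun t ↦ ?_
  rw [emdenFowlerMom]
  ring

theorem tendsto_potential_mul_sq_atTop (hu : IsGroundState a b p u) (hp : 1 < p) (hb : 0 < b)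
    (hβ : 0 < β) :
    Tendsto (fun t ↦ emdenFowlerPotential b β t * emdenFowlerPos β u t ^ 2) atTop (𝓝 0) := by
  have h_num := (((hu.tendsto_atTop.isBigO_one ℝ).pow 2).const_mul_left (β ^ 2)).sub
    (((hu.sinh_mul_isBigO_one hp hb).pow 2).const_mul_left (β - β ^ 2 + b))
  have h_mul := h_num.mul_isLittleO
    (((isLittleO_one_iff ℝ).2 (tendsto_inv_sinh_rpow_atTop hβ)).pow two_pos)
  simp only [one_pow, mul_one] at h_mul
  refine ((isLittleO_one_iff ℝ).1 h_mul).congr' ?_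
  filter_upwards [eventually_gt_atTop 0] with t ht
  have hr := (rpow_pos_of_pos (sinh_pos_iff.2 ht) β).ne'
  rw [emdenFowlerPotential, emdenFowlerPos]
  field

theorem tendsto_orbitEnergy_atTop (hu : IsGroundState a b p u) (hp : 1 < p) (hb : 0 < b)
    (hβ₀ : 0 < β) (hβ : β < 1) {H : ℝ → ℝ} (hH : Tendsto H (𝓝 0) (𝓝 0)) :
    Tendsto (orbitEnergy H (emdenFowlerPotential b β) (emdenFowlerPos β u) (emdenFowlerMom β u))
      atTop (𝓝 0) := by
  simpa using! (((((hu.tendsto_emdenFowlerMom_atTop hp hb hβ₀).pow 2).div_const 2).add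
    (hH.comp (hu.tendsto_emdenFowlerPos_atTop hp hb hβ))).add
      ((hu.tendsto_potential_mul_sq_atTop hp hb hβ₀).div_const 2))

theorem tendsto_orbitWronskian_zero (h₁ : IsGroundState a b p u₁) (h₂ : IsGroundState a b p u₂) :
    Tendsto (orbitWronskian (emdenFowlerPos β u₁) (emdenFowlerMom β u₁) (emdenFowlerPos β u₂)
      (emdenFowlerMom β u₂)) (𝓝[>] 0) (𝓝 0) := by
  have h_lim := tendsto_sinh_nhdsGT_zero.mul ((h₁.tendsto_zero.mul h₂.tendsto_deriv_zero).sub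
    (h₂.tendsto_zero.mul h₁.tendsto_deriv_zero))
  rw [zero_mul] at h_lim
  exact h_lim.congr'
    (eventually_mem_nhdsWithin.mono fun t ht ↦ (orbitWronskian_emdenFowler ht).symm)

theorem tendsto_emdenFowlerPos_zero (hu : IsGroundState a b p u) (hβ : 0 < β) :
    Tendsto (emdenFowlerPos β u) (𝓝[>] 0) (𝓝 0) := by
  simpa [zero_rpow hβ.ne'] using!
    (tendsto_sinh_nhdsGT_zero.rpow_const (Or.inr hβ.le)).mul hu.tendsto_zero

/-- Each energy blows up at `0`, but in the gap the singular terms `(β * cosh * u / sinh ^ β) ^ 2`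
cancel, and what remains is of order `sinh ^ (1 - 2 * β)`. -/
theorem energyGap_emdenFowler (h₁ : IsGroundState a b p u₁) (h₂ : IsGroundState a b p u₂)
    {G H : ℝ → ℝ} {t : ℝ} (ht : 0 < t) :
    energyGap H G (emdenFowlerPos β u₁) (emdenFowlerMom β u₁) (emdenFowlerPos β u₂)
        (emdenFowlerMom β u₂) t =
      H (emdenFowlerPos β u₁ t) * (u₂ t / u₁ t) ^ 2 - H (emdenFowlerPos β u₂ t) -
        sinh t ^ (1 - 2 * β) * (u₁ t * deriv u₂ t - u₂ t * deriv u₁ t) *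
          (sinh t * (deriv u₁ t * u₂ t + deriv u₂ t * u₁ t) + 2 * β * cosh t * (u₁ t * u₂ t)) /
            (2 * u₁ t ^ 2) := by
  have hs := sinh_pos_iff.2 ht
  have := rpow_pos_of_pos hs β
  have hu₁ := h₁.pos t ht
  have hu₂ := h₂.pos t ht
  have h_rpow : sinh t ^ (1 - 2 * β) = sinh t / (sinh t ^ β) ^ 2 := by
    rw [rpow_sub hs, rpow_one, mul_comm, rpow_mul hs.le, rpow_two]
  rw [energyGap_eq (h₁.emdenFowlerPos_pos ht).ne' (h₂.emdenFowlerPos_pos ht).ne',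
    orbitWronskian_emdenFowler ht, h_rpow]
  simp only [emdenFowlerPos, emdenFowlerMom]
  field

theorem tendsto_energyGap_zero (h₁ : IsGroundState a b p u₁) (h₂ : IsGroundState a b p u₂)
    (hβ₀ : 0 < β) (hβ : β < 1 / 2) {G H : ℝ → ℝ} (hH : Tendsto H (𝓝 0) (𝓝 0)) :
    Tendsto (energyGap H G (emdenFowlerPos β u₁) (emdenFowlerMom β u₁) (emdenFowlerPos β u₂)
      (emdenFowlerMom β u₂)) (𝓝[>] 0) (𝓝 0) := by
  have h_exp : 0 < 1 - 2 * β := by linarith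
  have h_pow : Tendsto (fun t ↦ sinh t ^ (1 - 2 * β)) (𝓝[>] 0) (𝓝 0) := by
    simpa [zero_rpow h_exp.ne'] using tendsto_sinh_nhdsGT_zero.rpow_const (Or.inr h_exp.le)
  have h_cosh : Tendsto cosh (𝓝[>] 0) (𝓝 (cosh 0)) := continuous_cosh.continuousWithinAt.tendsto
  have hu₁ := h₁.tendsto_zero
  have hu₂ := h₂.tendsto_zero
  have hu₁' := h₁.tendsto_deriv_zero
  have hu₂' := h₂.tendsto_deriv_zero
  have h_primitive := ((hH.comp (h₁.tendsto_emdenFowlerPos_zero hβ₀)).mul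
    ((hu₂.div hu₁ h₁.pos_zero.ne').pow 2)).sub (hH.comp (h₂.tendsto_emdenFowlerPos_zero hβ₀))
  have h_factor := (tendsto_sinh_nhdsGT_zero.mul ((hu₁'.mul hu₂).add (hu₂'.mul hu₁))).add
    ((h_cosh.const_mul (2 * β)).mul (hu₁.mul hu₂))
  have h_wronskian := ((h_pow.mul ((hu₁.mul hu₂').sub (hu₂.mul hu₁'))).mul h_factor).div
    ((hu₁.pow 2).const_mul 2) (mul_pos two_pos (pow_pos h₁.pos_zero 2)).ne'
  have h_lim := h_primitive.sub h_wronskian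
  simp only [zero_mul, zero_div, sub_zero] at h_lim
  exact h_lim.congr' (eventually_mem_nhdsWithin.mono
    fun t ht ↦ (energyGap_emdenFowler h₁ h₂ ht).symm)

theorem apply_zero_le (h₁ : IsGroundState a b p u₁) (h₂ : IsGroundState a b p u₂) (hp : 1 < p)
    (ha : 0 < a) (hb : 0 < b) : u₂ 0 ≤ u₁ 0 := by
  have hp₁ : 0 < p + 1 := by linarith
  obtain ⟨β, hβp, hβ₀, hβ⟩ : ∃ β, β * (p + 3) = 2 ∧ 0 < β ∧ β < 1 / 2 :=
    ⟨2 / (p + 3), by field, by positivity, by rw [div_lt_div_iff₀] <;> linarith⟩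
  have hH : ∀ s > 0, HasDerivAt (fun s ↦ a / (p + 1) * s ^ (p + 1)) (a * s ^ p) s :=
    fun s hs ↦ hasDerivAt_const_mul_rpow_add_one a hp₁.ne' hs
  have hh : StrictMonoOn (fun s ↦ a * s ^ p / s) (Ioi 0) := by
    simpa using strictMonoOn_const_mul_rpow_div_pow (n := 1) ha (by simpa using hp)
  have hHs : StrictMonoOn (fun s ↦ a / (p + 1) * s ^ (p + 1) / s ^ 2) (Ioi 0) :=
    strictMonoOn_const_mul_rpow_div_pow (by positivity) (by push_cast; linarith)
  have hH₀ : Tendsto (fun s ↦ a / (p + 1) * s ^ (p + 1)) (𝓝 0) (𝓝 0) := by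
    simpa [zero_rpow hp₁.ne'] using
      (continuousAt_rpow_const 0 (p + 1) (Or.inr hp₁.le)).tendsto.const_mul (a / (p + 1))
  by_contra! h_lt
  refine (h₁.isPositiveOrbit hβp).not_eventually_lt (h₂.isPositiveOrbit hβp)
    (fun t ht ↦ emdenFowlerWeight_pos β ht)
    (fun t ht ↦ (hasDerivAt_emdenFowlerPotential b β ht).differentiableAt)
    (fun t ht ↦ deriv_emdenFowlerPotential_neg hb hβ₀ hβ ht) hH hh hHs
    (tendsto_orbitWronskian_zero h₁ h₂) (tendsto_energyGap_zero h₁ h₂ hβ₀ hβ hH₀)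
    (h₁.tendsto_orbitEnergy_atTop hp hb hβ₀ (by linarith) hH₀)
    (h₂.tendsto_orbitEnergy_atTop hp hb hβ₀ (by linarith) hH₀) ?_
  filter_upwards [h₁.tendsto_zero.eventually_lt h₂.tendsto_zero h_lt, self_mem_nhdsWithin]
    with t hut ht
  exact mul_lt_mul_of_pos_left hut (rpow_pos_of_pos (sinh_pos_iff.2 ht) β)

end IsGroundState

theorem ground_state_uniqueness_general {a b p : ℝ} {u₁ u₂ : ℝ → ℝ} (hp : 1 < p) (ha : 0 < a)
    (hb : 0 < b) (h₁ : IsGroundState a b p u₁) (h₂ : IsGroundState a b p u₂) : u₁ 0 = u₂ 0 :=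
  (h₂.apply_zero_le h₁ hp ha hb).antisymm (h₁.apply_zero_le h₂ hp ha hb)

/-- Uniqueness of the positive decaying (ground state) solution: for `m > 2`,
`ã > 0`, `b̃ ≥ m` and `f(s) = ã·s^{1+2/m} − b̃·s`, there is at most one initial
value `α > 0` such that the solution of `u'' + coth(τ)·u' + f(u) = 0` on `(0,∞)`
with `u(0) = α`, `u'(0⁺) = 0` stays positive and decays to zero at infinity. -/
theorem ground_state_uniqueness
    (m a b : ℝ) (hm : 2 < m) (ha : 0 < a) (hb : m ≤ b)
    (F : ℝ → ℝ) (hF : ∀ s, F s = a * s ^ (1 + 2 / m) - b * s)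
    (α₁ α₂ : ℝ) (hα₁ : 0 < α₁) (hα₂ : 0 < α₂)
    (u₁ u₂ : ℝ → ℝ)
    (hu₁c : ContinuousOn u₁ (Ici 0))
    (hu₁d : ∀ τ ∈ Ioi (0 : ℝ), DifferentiableAt ℝ u₁ τ)
    (hu₁d' : ∀ τ ∈ Ioi (0 : ℝ), DifferentiableAt ℝ (deriv u₁) τ)
    (hode₁ : ∀ τ ∈ Ioi (0 : ℝ),
      deriv (deriv u₁) τ + (Real.cosh τ / Real.sinh τ) * deriv u₁ τ + F (u₁ τ) = 0)
    (hu₁0 : u₁ 0 = α₁)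
    (hu₁'0 : Tendsto (deriv u₁) (nhdsWithin 0 (Ioi 0)) (nhds 0))
    (hpos₁ : ∀ τ ∈ Ioi (0 : ℝ), 0 < u₁ τ)
    (hdec₁ : Tendsto u₁ atTop (nhds 0))
    (hu₂c : ContinuousOn u₂ (Ici 0))
    (hu₂d : ∀ τ ∈ Ioi (0 : ℝ), DifferentiableAt ℝ u₂ τ)
    (hu₂d' : ∀ τ ∈ Ioi (0 : ℝ), DifferentiableAt ℝ (deriv u₂) τ)
    (hode₂ : ∀ τ ∈ Ioi (0 : ℝ),
      deriv (deriv u₂) τ + (Real.cosh τ / Real.sinh τ) * deriv u₂ τ + F (u₂ τ) = 0)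
    (hu₂0 : u₂ 0 = α₂)
    (hu₂'0 : Tendsto (deriv u₂) (nhdsWithin 0 (Ioi 0)) (nhds 0))
    (hpos₂ : ∀ τ ∈ Ioi (0 : ℝ), 0 < u₂ τ)
    (hdec₂ : Tendsto u₂ atTop (nhds 0)) :
    α₁ = α₂ := by
  subst hu₁0 hu₂0
  obtain rfl := funext hF
  exact ground_state_uniqueness_general (lt_add_of_pos_right 1 (by positivity)) ha (by linarith)
    ⟨hu₁c, hu₁d, hu₁d', hode₁, hu₁'0, hα₁, hpos₁, hdec₁⟩
    ⟨hu₂c, hu₂d, hu₂d', hode₂, hu₂'0, hα₂, hpos₂, hdec₂⟩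
end
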